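/- arXiv:1907.01373 — 6 statements merged into one kernel-verified Lean document; each statement's English description precedes it below -/
import Mathlib

section
/- Let 0<s<1 and 1≤p<∞ satisfy sp ≥ 1, and let m ≥ 1. Let (Ñ, d_Ñ) and (N, d_N) be metric spaces with Ñ connected, and let π : Ñ → N be a topological covering map which is nonexpansive and an isometry at scale ρ>0 (i.e. d_N(π(a),π(b)) ≤ d_Ñ(a,b) for all a,b, with equality whenever d_Ñ(a,b) ≤ ρ). Assume that some fiber π^{-1}({y₀}) is at most countable, that every deck transformation (homeomorphism τ : Ñ → Ñ with π ∘ τ = π) is an isometry of Ñ, and that the covering is normal: for all a, b ∈ Ñ with π(a) = π(b) there is a deck transformation τ with τ(a) = b. Let Ω ⊆ ℝ^m be a connected open set and let ũ, ṽ : Ω → Ñ be Borel measurable maps in W^{s,p}_loc(Ω, Ñ) with π ∘ ũ = π ∘ ṽ almost everywhere on Ω. Then there exists a deck transformation τ such that ṽ = τ ∘ ũ almost everywhere on Ω. -/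
open MeasureTheory Set ENNReal

/-- The Gagliardo `W^{s,p}` double integral of a map `w : ℝ^m → X` on a set `A`. -/
noncomputable def gagliardoIntegral {m : ℕ} {X : Type*} [PseudoEMetricSpace X] (s p : ℝ)
    (A : Set (EuclideanSpace ℝ (Fin m))) (w : EuclideanSpace ℝ (Fin m) → X) : ℝ≥0∞ :=
  ∫⁻ x in A, ∫⁻ y in A, edist (w x) (w y) ^ p / edist x y ^ ((m : ℝ) + s * p)

/-- `w ∈ W^{s,p}_loc(Ω, X)`: every point of `Ω` has an open neighborhood in `Ω` on which the
Gagliardo double integral is finite. -/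
def MemWsplocOn {m : ℕ} {X : Type*} [PseudoEMetricSpace X] (s p : ℝ)
    (Ω : Set (EuclideanSpace ℝ (Fin m))) (w : EuclideanSpace ℝ (Fin m) → X) : Prop :=
  ∀ x ∈ Ω, ∃ U : Set (EuclideanSpace ℝ (Fin m)),
    IsOpen U ∧ x ∈ U ∧ U ⊆ Ω ∧ gagliardoIntegral s p U w < ∞


theorem countable_of_all_measurable {E : Type*} [MeasurableSpace E] [StandardBorelSpace E]
    (Z : Set E) (hZ : ∀ S ⊆ Z, MeasurableSet S) : Z.Countable := by
  by_contra hc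
  have hZm := hZ Z subset_rfl
  haveI : StandardBorelSpace Z := hZm.standardBorel
  have hc' : ¬ Countable Z := hc
  have hR : ¬ Countable ℝ := fun h => Cardinal.not_countable_real (Set.to_countable _)
  let e : Z ≃ᵐ ℝ := PolishSpace.measurableEquivOfNotCountable hc' hR
  have hall : ∀ T : Set ℝ, MeasurableSet T := by
    intro T
    rw [← e.measurableSet_preimage]
    have h1 : MeasurableSet (Subtype.val '' (e ⁻¹' T)) := hZ _ (by rintro _ ⟨z, _, rfl⟩; exact z.2)
    have h2 := measurable_subtype_coe (p := fun x => x ∈ Z) h1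
    rwa [Set.preimage_image_eq _ Subtype.val_injective] at h2
  obtain ⟨b, hbc, hb⟩ := (inferInstance : MeasurableSpace.CountablyGenerated ℝ)
  have h3 := MeasurableSpace.cardinal_measurableSet_le_continuum (s := b)
    (hbc.le_aleph0.trans Cardinal.aleph0_le_continuum)
  rw [← hb] at h3
  have h4 : {t : Set ℝ | MeasurableSet t} = univ := eq_univ_of_forall hall
  rw [h4, Cardinal.mk_univ, Cardinal.mk_set, Cardinal.mk_real] at h3
  exact absurd h3 (not_le.2 (Cardinal.cantor _))

theorem isSeparable_range_of_measurable {E X : Type*} [MeasurableSpace E] [StandardBorelSpace E]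
    [MetricSpace X] [MeasurableSpace X] [BorelSpace X] (f : E → X) (hf : Measurable f) :
    TopologicalSpace.IsSeparable (range f) := by
  classical
  have key : ∀ ε : ℝ, 0 < ε → ∃ t : Set X, t.Countable ∧ range f ⊆ ⋃ x ∈ t, Metric.ball x ε := by
    intro ε hε
    obtain ⟨Z, hZ⟩ := zorn_subset {Z : Set E | Z.Pairwise (fun a b => ε ≤ dist (f a) (f b))} (by
      intro c hc hchain
      refine ⟨⋃₀ c, ?_, fun s hs => subset_sUnion_of_mem hs⟩
      exact (pairwise_sUnion hchain.directedOn).2 hc)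
    have hsep := hZ.prop
    have hcov : ∀ x, ∃ z ∈ Z, dist (f x) (f z) < ε := by
      intro x
      by_contra hx
      push Not at hx
      have h1 : insert x Z ∈ {Z : Set E | Z.Pairwise (fun a b => ε ≤ dist (f a) (f b))} := by
        have : Std.Symm (fun a b => ε ≤ dist (f a) (f b)) := ⟨fun a b h => by rwa [dist_comm]⟩
        exact pairwise_insert_of_symm.2 ⟨hsep, fun b hb _ => hx b hb⟩
      have h2 := hZ.le_of_ge h1 (subset_insert _ _)
      have := hx x (h2 (mem_insert _ _))
      rw [dist_self] at this
      linarith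
    have huniq : ∀ x, ∀ z ∈ Z, ∀ z' ∈ Z, dist (f x) (f z) < ε / 2 → dist (f x) (f z') < ε / 2 →
        z = z' := by
      intro x z hz z' hz' h h'
      by_contra hne
      have h1 := hsep hz hz' hne
      have h2 := dist_triangle_left (f z) (f z') (f x)
      simp only at h1
      linarith
    have hBm : ∀ S : Set E, MeasurableSet {x | ∃ z ∈ S, dist (f x) (f z) < ε / 2} := by
      intro S
      have : {x | ∃ z ∈ S, dist (f x) (f z) < ε / 2} = f ⁻¹' (⋃ z ∈ S, Metric.ball (f z) (ε/2)) := by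
        ext x; simp
      rw [this]
      exact hf (isOpen_biUnion fun _ _ => Metric.isOpen_ball).measurableSet
    have hZc : Z.Countable := by
      rcases isEmpty_or_nonempty E with hE | ⟨⟨e0⟩⟩
      · exact Set.to_countable _
      let g : E → E := fun x => if h : ∃ z ∈ Z, dist (f x) (f z) < ε / 2 then h.choose else e0
      have hg1 : ∀ x, ∀ z ∈ Z, dist (f x) (f z) < ε / 2 → g x = z := by
        intro x z hz h
        have hex : ∃ z ∈ Z, dist (f x) (f z) < ε / 2 := ⟨z, hz, h⟩
        simp only [g, dif_pos hex]
        exact huniq x _ hex.choose_spec.1 z hz hex.choose_spec.2 h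
      have hg2 : ∀ x, (¬ ∃ z ∈ Z, dist (f x) (f z) < ε / 2) → g x = e0 := by
        intro x h
        simp only [g, dif_neg h]
      have hgm : Measurable g := by
        intro T _
        have : g ⁻¹' T = {x | ∃ z ∈ Z ∩ T, dist (f x) (f z) < ε / 2} ∪
            ({x | ∃ z ∈ Z, dist (f x) (f z) < ε / 2}ᶜ ∩ {x | e0 ∈ T}) := by
          ext x
          by_cases hex : ∃ z ∈ Z, dist (f x) (f z) < ε / 2
          · obtain ⟨z, hz, h⟩ := hex
            simp only [mem_preimage, hg1 x z hz h, mem_union, mem_ofPred_eq, mem_inter_iff,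
              mem_compl_iff]
            constructor
            · intro hT; exact Or.inl ⟨z, ⟨hz, hT⟩, h⟩
            · rintro (⟨z', ⟨hz', hT⟩, h'⟩ | ⟨hn, _⟩)
              · rwa [huniq x z hz z' hz' h h']
              · exact absurd ⟨z, hz, h⟩ hn
          · simp only [mem_preimage, hg2 x hex, mem_union, mem_ofPred_eq, mem_inter_iff,
              mem_compl_iff]
            constructor
            · intro hT; exact Or.inr ⟨hex, hT⟩
            · rintro (⟨z', ⟨hz', hT⟩, h'⟩ | ⟨hn, h⟩)
              · exact absurd ⟨z', hz', h'⟩ hex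
              · exact h
        rw [this]
        exact (hBm _).union ((hBm _).compl.inter (MeasurableSet.const _))
      refine countable_of_all_measurable Z fun S hS => ?_
      have : S = {x | ∃ z ∈ S, dist (f x) (f z) < ε / 2} ∩ {x | g x = x} := by
        ext x
        constructor
        · intro hx
          have hd : dist (f x) (f x) < ε / 2 := by rw [dist_self]; linarith
          exact ⟨⟨x, hx, hd⟩, hg1 x x (hS hx) hd⟩
        · rintro ⟨⟨z, hz, h⟩, hgx⟩
          have := hg1 x z (hS hz) h
          rw [mem_ofPred_eq, this] at hgx
          rwa [← hgx]
      rw [this]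
      refine (hBm S).inter ?_
      let := upgradeStandardBorel E
      exact measurableSet_eq_fun hgm measurable_id
    refine ⟨f '' Z, hZc.image f, ?_⟩
    rintro _ ⟨x, rfl⟩
    obtain ⟨z, hz, h⟩ := hcov x
    exact mem_biUnion (mem_image_of_mem f hz) h
  obtain ⟨t, -, htc, ht⟩ := EMetric.subset_countable_closure_of_almost_dense_set (range f) (by
    intro ε hε
    obtain ⟨δ, hδ0, hδ⟩ := ENNReal.lt_iff_exists_real_btwn.1 hε
    have hδ' : 0 < δ := by simpa using hδ.1
    obtain ⟨t, htc, ht⟩ := key δ hδ'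
    refine ⟨t, htc, ht.trans (iUnion₂_mono fun x _ y hy => ?_)⟩
    rw [Metric.mem_ball] at hy
    have : edist y x ≤ ENNReal.ofReal δ := by
      rw [edist_dist]; exact ENNReal.ofReal_le_ofReal hy.le
    exact this.trans hδ.2.le)
  exact ⟨t, htc, ht⟩

theorem null_of_kernel_finite {m : ℕ} (q : ℝ) (hq : (m : ℝ) + 1 ≤ q)
    (P Q : Set (EuclideanSpace ℝ (Fin m))) (hP : MeasurableSet P) (hQ : MeasurableSet Q)
    (hm : 1 ≤ m)
    (hPQ : ∀ x h, x ∈ P → x + (2:ℝ) • h ∈ Q → x + h ∈ P ∨ x + h ∈ Q)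
    (hfin : ∫⁻ x in P, ∫⁻ y in Q, 1 / edist x y ^ q < ∞) :
    volume P = 0 ∨ volume Q = 0 := by
  have hne : Nonempty (Fin m) := ⟨⟨0, hm⟩⟩
  have hq0 : 0 ≤ q := by
    have : (0:ℝ) ≤ m := Nat.cast_nonneg m
    linarith
  let Ψ : EuclideanSpace ℝ (Fin m) → ℝ≥0∞ := fun h => volume {x | x ∈ P ∧ x + h ∈ Q}
  have hDm : MeasurableSet {z : EuclideanSpace ℝ (Fin m) × EuclideanSpace ℝ (Fin m) |
      z.2 ∈ P ∧ z.2 + z.1 ∈ Q} :=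
    (measurable_snd hP).inter ((measurable_snd.add measurable_fst) hQ)
  have hΨm : Measurable Ψ := measurable_measure_prodMk_left hDm
  -- general Fubini identity
  have hfub : ∀ φ : EuclideanSpace ℝ (Fin m) → ℝ≥0∞, Measurable φ →
      ∫⁻ x in P, ∫⁻ y in Q, φ (y - x) = ∫⁻ h, Ψ h * φ h := by
    intro φ hφ
    calc ∫⁻ x in P, ∫⁻ y in Q, φ (y - x)
        = ∫⁻ x, ∫⁻ h, {z : EuclideanSpace ℝ (Fin m) × EuclideanSpace ℝ (Fin m) |
      z.2 ∈ P ∧ z.2 + z.1 ∈ Q}.indicator (fun z => φ z.1) (h, x) := by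
          rw [← lintegral_indicator hP]
          congr 1
          ext x
          by_cases hx : x ∈ P
          · rw [indicator_of_mem hx, ← lintegral_indicator hQ,
              ← lintegral_add_left_eq_self _ x]
            congr 1
            ext h
            by_cases hh : x + h ∈ Q
            · simp [indicator, hh, hx]
            · simp [indicator, hh]
          · rw [indicator_of_notMem hx]
            simp [indicator, hx]
      _ = ∫⁻ h, ∫⁻ x, {z : EuclideanSpace ℝ (Fin m) × EuclideanSpace ℝ (Fin m) |
      z.2 ∈ P ∧ z.2 + z.1 ∈ Q}.indicator (fun z => φ z.1) (h, x) := by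
          rw [lintegral_lintegral_swap]
          exact (((hφ.comp measurable_fst).indicator hDm).comp measurable_swap).aemeasurable
      _ = ∫⁻ h, Ψ h * φ h := by
          congr 1
          ext h
          have : ∀ x, {z : EuclideanSpace ℝ (Fin m) × EuclideanSpace ℝ (Fin m) |
            z.2 ∈ P ∧ z.2 + z.1 ∈ Q}.indicator (fun z => φ z.1) (h, x)
            = {x | x ∈ P ∧ x + h ∈ Q}.indicator (fun _ => φ h) x := by
            intro x; simp [indicator]
          simp_rw [this]
          have hms : MeasurableSet {x | x ∈ P ∧ x + h ∈ Q} :=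
            hP.inter ((measurable_id.add_const h) hQ)
          rw [lintegral_indicator_const hms, mul_comm]
  let k : EuclideanSpace ℝ (Fin m) → ℝ≥0∞ := fun h => (‖h‖ₑ ^ q)⁻¹
  have hkm : Measurable k := (measurable_enorm.pow_const q).inv
  have hkfin : ∫⁻ h, Ψ h * k h < ∞ := by
    rw [← hfub k hkm]
    convert hfin using 6 with x y
    simp only [k, one_div, edist_comm x, edist_eq_enorm_sub]
  have hΨ2 : ∀ h, Ψ ((2:ℝ) • h) ≤ 2 * Ψ h := by
    intro h
    have hsub : {x | x ∈ P ∧ x + (2:ℝ) • h ∈ Q} ⊆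
        {x | x ∈ P ∧ x + h ∈ Q} ∪ (fun x => x + h) ⁻¹' {x | x ∈ P ∧ x + h ∈ Q} := by
      rintro x ⟨hx, hx2⟩
      rcases hPQ x h hx hx2 with h1 | h1
      · right
        refine ⟨h1, ?_⟩
        rwa [add_assoc, ← two_smul ℝ]
      · exact Or.inl ⟨hx, h1⟩
    calc Ψ ((2:ℝ) • h) ≤ _ := measure_mono hsub
      _ ≤ _ := measure_union_le _ _
      _ = Ψ h + Ψ h := by rw [measure_preimage_add_right]
      _ = 2 * Ψ h := (two_mul _).symm
  let G : EuclideanSpace ℝ (Fin m) → ℝ≥0∞ := fun h => Ψ h * k h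
  have hGm : Measurable G := hΨm.mul hkm
  have hc : ENNReal.ofReal |((2:ℝ) ^ Module.finrank ℝ (EuclideanSpace ℝ (Fin m)))⁻¹| =
      ((2:ℝ≥0∞) ^ (m:ℝ))⁻¹ := by
    rw [finrank_euclideanSpace_fin, abs_of_pos (by positivity),
      ENNReal.ofReal_inv_of_pos (by positivity), ENNReal.ofReal_pow (by positivity)]
    simp
  have hG2 : ∀ h, G ((2:ℝ) • h) ≤ ((2:ℝ≥0∞) ^ (m:ℝ))⁻¹ * G h := by
    intro h
    have h2 : k ((2:ℝ) • h) = ((2:ℝ≥0∞) ^ q)⁻¹ * k h := by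
      simp only [k, enorm_smul]
      rw [ENNReal.mul_rpow_of_nonneg _ _ hq0, ENNReal.mul_inv]
      · congr 3
        simp [enorm_eq_nnnorm]
      · left; simp [enorm_eq_nnnorm]
      · left; simp [enorm_eq_nnnorm]
    have h3 : 2 * ((2:ℝ≥0∞) ^ q)⁻¹ ≤ ((2:ℝ≥0∞) ^ (m:ℝ))⁻¹ := by
      rw [← ENNReal.rpow_neg, ← ENNReal.rpow_neg]
      nth_rewrite 1 [← ENNReal.rpow_one 2]
      rw [← ENNReal.rpow_add _ _ (by norm_num) (by norm_num)]
      exact ENNReal.rpow_le_rpow_of_exponent_le (by norm_num) (by linarith)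
    calc G ((2:ℝ) • h) = Ψ ((2:ℝ) • h) * (((2:ℝ≥0∞) ^ q)⁻¹ * k h) := by simp only [G, h2]
      _ ≤ 2 * Ψ h * (((2:ℝ≥0∞) ^ q)⁻¹ * k h) := by gcongr; exact hΨ2 h
      _ = (2 * ((2:ℝ≥0∞) ^ q)⁻¹) * G h := by simp only [G]; ring
      _ ≤ _ := by gcongr
  have hJ : ∀ R : ℝ, ∫⁻ h in Metric.ball 0 R, G h ≤ ∫⁻ h in Metric.ball 0 (R / 2), G h := by
    intro R
    have h1 : ∫⁻ h, (Metric.ball 0 R).indicator G ((2:ℝ) • h) =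
        ((2:ℝ≥0∞) ^ (m:ℝ))⁻¹ * ∫⁻ h in Metric.ball 0 R, G h := by
      rw [← lintegral_indicator measurableSet_ball, ← lintegral_map (f := (Metric.ball 0 R).indicator G) (g := fun h => (2:ℝ) • h) (hGm.indicator measurableSet_ball)
        (measurable_const_smul (2:ℝ)),
        Measure.map_addHaar_smul _ (by norm_num), hc, lintegral_smul_measure, smul_eq_mul]
    have h2 : ∫⁻ h, (Metric.ball 0 R).indicator G ((2:ℝ) • h) ≤
        ((2:ℝ≥0∞) ^ (m:ℝ))⁻¹ * ∫⁻ h in Metric.ball 0 (R / 2), G h := by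
      rw [← lintegral_indicator measurableSet_ball,
        ← lintegral_const_mul _ (hGm.indicator measurableSet_ball)]
      refine lintegral_mono fun h => ?_
      by_cases hh : h ∈ Metric.ball (0 : EuclideanSpace ℝ (Fin m)) (R / 2)
      · rw [indicator_of_mem hh]
        exact (indicator_le_self _ _ _).trans (hG2 h)
      · rw [indicator_of_notMem]
        · exact zero_le
        · intro h3
          apply hh
          rw [mem_ball_zero_iff] at h3 ⊢
          rw [norm_smul] at h3
          norm_num at h3
          linarith
    rw [h1] at h2
    exact (ENNReal.mul_le_mul_iff_right (by simp) (by simp)).1 h2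
  have hJn : ∀ (R : ℝ) (n : ℕ), ∫⁻ h in Metric.ball 0 R, G h ≤
      ∫⁻ h in Metric.ball 0 (R / 2 ^ n), G h := by
    intro R n
    induction n with
    | zero => simp
    | succ n ih =>
      refine ih.trans ((hJ _).trans_eq ?_)
      rw [pow_succ, div_div]
  have hJ0 : ∀ R : ℝ, 0 ≤ R → ∫⁻ h in Metric.ball 0 R, G h = 0 := by
    intro R hR
    have ht : Filter.Tendsto (fun n : ℕ => ∫⁻ h in Metric.ball 0 (R / 2 ^ n), G h) Filter.atTop
        (nhds 0) := by
      refine tendsto_setLIntegral_zero hkfin.ne ?_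
      have hv : (volume ∘ fun n : ℕ => Metric.ball (0 : EuclideanSpace ℝ (Fin m)) (R / 2 ^ n)) =
        fun n : ℕ => ENNReal.ofReal ((R / 2 ^ n) ^ m) * volume (Metric.ball (0 : EuclideanSpace ℝ (Fin m)) 1) := by
        ext n
        simp only [Function.comp]
        rw [Measure.addHaar_ball _ _ (by positivity), finrank_euclideanSpace_fin]
      rw [hv]
      have h1 : Filter.Tendsto (fun n : ℕ => R / 2 ^ n) Filter.atTop (nhds 0) :=
        tendsto_const_nhds.div_atTop (tendsto_pow_atTop_atTop_of_one_lt (by norm_num))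
      have h2 := ENNReal.tendsto_ofReal (h1.pow m)
      have h3 := ENNReal.Tendsto.mul_const (b := volume (Metric.ball (0 : EuclideanSpace ℝ (Fin m)) 1))
        h2 (Or.inr measure_ball_lt_top.ne)
      simpa [show m ≠ 0 by omega] using h3
    exact le_antisymm (ge_of_tendsto' ht (hJn R)) zero_le
  have hae : ∀ᵐ h, Ψ h = 0 := by
    have h1 : ∀ n : ℕ, ∀ᵐ h : EuclideanSpace ℝ (Fin m), h ∈ Metric.ball 0 (n:ℝ) → G h = 0 := fun n =>
      (setLIntegral_eq_zero_iff measurableSet_ball hGm).1 (hJ0 n (Nat.cast_nonneg n))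
    filter_upwards [ae_all_iff.2 h1] with h hh
    obtain ⟨n, hn⟩ := exists_nat_gt ‖h‖
    have h2 := hh n (mem_ball_zero_iff.2 hn)
    rcases mul_eq_zero.1 h2 with h3 | h3
    · exact h3
    · simp [k, enorm_eq_nnnorm] at h3
      linarith [h3.2]
  have hprod := hfub (fun _ => 1) measurable_const
  have hz : ∫⁻ h, Ψ h * 1 = 0 := by
    simp only [mul_one]
    exact (lintegral_eq_zero_iff hΨm).2 hae
  rw [hz] at hprod
  simpa [or_comm] using hprod

theorem gagliardo_ball_dichotomy (s p : ℝ) (m : ℕ)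
    (hp1 : 1 ≤ p) (hsp : 1 ≤ s * p) (hm : 1 ≤ m)
    {X : Type*} [MetricSpace X]
    (ut vt : EuclideanSpace ℝ (Fin m) → X) (hu : StronglyMeasurable ut)
    (c : EuclideanSpace ℝ (Fin m)) (r : ℝ) (A : Set (EuclideanSpace ℝ (Fin m)))
    (hA : MeasurableSet A) (δ : ℝ) (hδ : 0 < δ)
    (hgu : gagliardoIntegral s p (Metric.ball c r) ut < ∞)
    (hgv : gagliardoIntegral s p (Metric.ball c r) vt < ∞)
    (hsep : ∀ x ∈ A, ∀ᵐ y ∂(volume.restrict (Metric.ball c r \ A)),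
      δ ≤ dist (ut x) (ut y) ∨ δ ≤ dist (vt x) (vt y)) :
    volume (Metric.ball c r ∩ A) = 0 ∨ volume (Metric.ball c r \ A) = 0 := by
  have hp0 : 0 ≤ p := by linarith
  have hB : MeasurableSet (Metric.ball c r) := measurableSet_ball
  refine null_of_kernel_finite ((m:ℝ) + s * p) (by linarith) _ _ (hB.inter hA)
    (hB.diff hA) hm ?_ ?_
  · rintro x h ⟨hx, -⟩ ⟨hy, -⟩
    have hxh : x + h ∈ Metric.ball c r := by
      have := (convex_ball c r) hx hy (a := 1/2) (b := 1/2) (by norm_num) (by norm_num)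
        (by norm_num)
      convert this using 1
      module
    by_cases hh : x + h ∈ A
    · exact Or.inl ⟨hxh, hh⟩
    · exact Or.inr ⟨hxh, hh⟩
  · set q := (m:ℝ) + s * p with hqdef
    set B := Metric.ball c r with hBdef
    have hC0 : ENNReal.ofReal δ ^ p ≠ 0 := by
      simp [hδ, hp0]
    have hCt : ENNReal.ofReal δ ^ p ≠ ∞ := ENNReal.rpow_ne_top_of_nonneg hp0 ENNReal.ofReal_ne_top
    let F : EuclideanSpace ℝ (Fin m) × EuclideanSpace ℝ (Fin m) → ℝ≥0∞ :=
      fun z => edist (ut z.1) (ut z.2) ^ p / edist z.1 z.2 ^ q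
    have hFm : Measurable F :=
      (((hu.comp_measurable measurable_fst).edist (hu.comp_measurable measurable_snd)).measurable.pow_const
        p).div ((measurable_fst.edist measurable_snd).pow_const q)
    have hkey : ENNReal.ofReal δ ^ p * ∫⁻ x in B ∩ A, ∫⁻ y in B \ A, 1 / edist x y ^ q ≤
        gagliardoIntegral s p B ut + gagliardoIntegral s p B vt := by
      calc ENNReal.ofReal δ ^ p * ∫⁻ x in B ∩ A, ∫⁻ y in B \ A, 1 / edist x y ^ q
          = ∫⁻ x in B ∩ A, ∫⁻ y in B \ A, ENNReal.ofReal δ ^ p * (1 / edist x y ^ q) := by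
            rw [← lintegral_const_mul' _ _ hCt]
            congr 1
            ext x
            rw [← lintegral_const_mul' _ _ hCt]
        _ ≤ ∫⁻ x in B ∩ A, ∫⁻ y in B \ A, (edist (ut x) (ut y) ^ p / edist x y ^ q +
              edist (vt x) (vt y) ^ p / edist x y ^ q) := by
            refine setLIntegral_mono' (hB.inter hA) fun x hx => lintegral_mono_ae ?_
            filter_upwards [hsep x hx.2] with y hy
            rw [mul_one_div]
            rcases hy with h | h
            · refine le_trans (ENNReal.div_le_div ?_ le_rfl) le_self_add
              gcongr
              rw [edist_dist]
              exact ENNReal.ofReal_le_ofReal h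
            · refine le_trans (ENNReal.div_le_div ?_ le_rfl) le_add_self
              gcongr
              rw [edist_dist]
              exact ENNReal.ofReal_le_ofReal h
        _ ≤ ∫⁻ x in B, ∫⁻ y in B, (edist (ut x) (ut y) ^ p / edist x y ^ q +
              edist (vt x) (vt y) ^ p / edist x y ^ q) := by
            refine (lintegral_mono fun x => lintegral_mono_set sdiff_subset).trans
              (lintegral_mono_set inter_subset_left)
        _ = ∫⁻ x in B, ((∫⁻ y in B, edist (ut x) (ut y) ^ p / edist x y ^ q) +
              ∫⁻ y in B, edist (vt x) (vt y) ^ p / edist x y ^ q) := by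
            congr 1
            ext x
            exact lintegral_add_left (hFm.comp measurable_prodMk_left) _
        _ = _ := lintegral_add_left hFm.lintegral_prod_right' _
    have hlt := hkey.trans_lt (ENNReal.add_lt_top.2 ⟨hgu, hgv⟩)
    by_contra hcon
    rw [not_lt, top_le_iff] at hcon
    rw [hcon, ENNReal.mul_top hC0] at hlt
    exact lt_irrefl _ hlt

theorem gagliardoIntegral_mono {m : ℕ} {X : Type*} [PseudoEMetricSpace X] (s p : ℝ)
    {A B : Set (EuclideanSpace ℝ (Fin m))} (h : A ⊆ B) (w : EuclideanSpace ℝ (Fin m) → X) :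
    gagliardoIntegral s p A w ≤ gagliardoIntegral s p B w :=
  (lintegral_mono fun _ => lintegral_mono_set h).trans (lintegral_mono_set h)

/-- **Uniqueness of liftings up to a deck transformation, for normal coverings.** For
`sp ≥ 1`, let `π : Ñ → N` be a covering map between metric spaces, nonexpansive and an
isometry at scale `ρ > 0`, with `Ñ` connected, some fiber at most countable, all deck
transformations isometries, and the covering normal. If `Ω ⊆ ℝ^m` is a connected open set
and `ũ, ṽ ∈ W^{s,p}_loc(Ω,Ñ)` are Borel measurable with `π ∘ ũ = π ∘ ṽ` a.e. on `Ω`, then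
there is a deck transformation `τ` with `ṽ = τ ∘ ũ` a.e. on `Ω`. -/
theorem lifting_uniqueness_normal_covering (s p : ℝ) (m : ℕ) (hs0 : 0 < s) (hs1 : s < 1)
    (hp1 : 1 ≤ p) (hsp : 1 ≤ s * p) (hm : 1 ≤ m)
    {Ntl N : Type*} [MetricSpace Ntl] [MetricSpace N] [ConnectedSpace Ntl]
    [MeasurableSpace Ntl] [BorelSpace Ntl]
    (π : Ntl → N) (hcov : IsCoveringMap π) (ρ : ℝ) (hρ : 0 < ρ)
    (hnonexp : ∀ a b : Ntl, dist (π a) (π b) ≤ dist a b)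
    (hiso : ∀ a b : Ntl, dist a b ≤ ρ → dist (π a) (π b) = dist a b)
    (hfiber : ∃ y₀ : N, (π ⁻¹' {y₀}).Countable)
    (hdeckiso : ∀ τ : Ntl ≃ₜ Ntl, (∀ x, π (τ x) = π x) → Isometry τ)
    (hnormal : ∀ a b : Ntl, π a = π b → ∃ τ : Ntl ≃ₜ Ntl, (∀ x, π (τ x) = π x) ∧ τ a = b)
    (Ω : Set (EuclideanSpace ℝ (Fin m))) (hΩo : IsOpen Ω) (hΩc : IsConnected Ω)
    (ut vt : EuclideanSpace ℝ (Fin m) → Ntl) (hutm : Measurable ut) (hvtm : Measurable vt)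
    (hutloc : MemWsplocOn s p Ω ut) (hvtloc : MemWsplocOn s p Ω vt)
    (hπ : ∀ᵐ x ∂(volume.restrict Ω), π (ut x) = π (vt x)) :
    ∃ τ : Ntl ≃ₜ Ntl, (∀ x, π (τ x) = π x) ∧
      ∀ᵐ x ∂(volume.restrict Ω), vt x = τ (ut x) := by
  have hu : StronglyMeasurable ut :=
    stronglyMeasurable_iff_measurable_separable.2 ⟨hutm, isSeparable_range_of_measurable ut hutm⟩
  have hv : StronglyMeasurable vt :=
    stronglyMeasurable_iff_measurable_separable.2 ⟨hvtm, isSeparable_range_of_measurable vt hvtm⟩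
  have hfib : ∀ a b : Ntl, π a = π b → dist a b ≤ ρ → a = b := by
    intro a b hab hd
    have := hiso a b hd
    rw [hab, dist_self] at this
    exact dist_eq_zero.1 this.symm
  -- a deck transformation whose coincidence set has positive measure
  obtain ⟨τ, hτ, hpos⟩ : ∃ τ : Ntl ≃ₜ Ntl, (∀ x, π (τ x) = π x) ∧
      volume (Ω ∩ {x | vt x = τ (ut x)}) ≠ 0 := by
    by_contra hcon
    push Not at hcon
    let T : Set (Ntl × Ntl) := {z | π z.1 = π z.2} ∩ (range ut ×ˢ range vt)
    have hT : TopologicalSpace.IsSeparable T :=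
      ((isSeparable_range_of_measurable ut hutm).prod
        (isSeparable_range_of_measurable vt hvtm)).mono inter_subset_right
    obtain ⟨D, hDT, hDc, hD⟩ := hT.exists_countable_dense_subset
    have hch : ∀ z : Ntl × Ntl, ∃ τ : Ntl ≃ₜ Ntl, z ∈ D → (∀ x, π (τ x) = π x) ∧ τ z.1 = z.2 := by
      intro z
      by_cases hz : z ∈ D
      · obtain ⟨τ, h⟩ := hnormal z.1 z.2 (hDT hz).1
        exact ⟨τ, fun _ => h⟩
      · exact ⟨Homeomorph.refl _, fun h => absurd h hz⟩
    choose σ hσ using hch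
    have hnull : volume (⋃ z ∈ D, Ω ∩ {x | vt x = σ z (ut x)}) = 0 :=
      (measure_biUnion_null_iff hDc).2 fun z hz => hcon (σ z) (hσ z hz).1
    have hae : ∀ᵐ x ∂(volume.restrict Ω), False := by
      have h1 : ∀ᵐ x ∂(volume.restrict Ω), x ∉ ⋃ z ∈ D, Ω ∩ {x | vt x = σ z (ut x)} :=
        ae_restrict_of_ae (measure_eq_zero_iff_ae_notMem.1 hnull)
      filter_upwards [hπ, h1, ae_restrict_mem hΩo.measurableSet] with x hx hx1 hxΩ
      apply hx1
      have hxT : (ut x, vt x) ∈ T := ⟨hx, mem_range_self x, mem_range_self x⟩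
      obtain ⟨z, hz, hzd⟩ := Metric.mem_closure_iff.1 (hD hxT) (ρ / 2) (by linarith)
      rw [Prod.dist_eq, max_lt_iff] at hzd
      refine mem_biUnion hz ⟨hxΩ, ?_⟩
      obtain ⟨hs1, hs2⟩ := hσ z hz
      refine (hfib _ _ ((hs1 _).trans hx) ?_).symm
      have h2 := (hdeckiso (σ z) hs1).dist_eq (ut x) z.1
      have h3 := dist_triangle (σ z (ut x)) (σ z z.1) (vt x)
      rw [h2, hs2, dist_comm z.2] at h3
      have h4 := hzd.1
      have h5 := hzd.2
      simp only at h4 h5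
      linarith
    have h0 : volume Ω = 0 := by simpa [ae_iff] using hae
    exact (hΩo.measure_pos volume hΩc.nonempty).ne' h0
  refine ⟨τ, hτ, ?_⟩
  set A : Set (EuclideanSpace ℝ (Fin m)) := {x | vt x = τ (ut x)} with hAdef
  have hA : MeasurableSet A := hv.measurableSet_eq_fun (τ.continuous.comp_stronglyMeasurable hu)
  have hloc : ∀ x ∈ Ω, ∃ r > 0, Metric.ball x r ⊆ Ω ∧
      (volume (Metric.ball x r ∩ A) = 0 ∨ volume (Metric.ball x r \ A) = 0) := by
    intro x hx
    obtain ⟨U, hUo, hxU, hUΩ, hU⟩ := hutloc x hx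
    obtain ⟨V, hVo, hxV, hVΩ, hV⟩ := hvtloc x hx
    obtain ⟨r, hr, hball⟩ := Metric.isOpen_iff.1 (hUo.inter hVo) x ⟨hxU, hxV⟩
    have hbU : Metric.ball x r ⊆ U := hball.trans inter_subset_left
    have hbV : Metric.ball x r ⊆ V := hball.trans inter_subset_right
    refine ⟨r, hr, hbU.trans hUΩ, ?_⟩
    refine gagliardo_ball_dichotomy s p m hp1 hsp hm ut vt hu x r A hA (ρ / 2) (by linarith)
      ((gagliardoIntegral_mono s p hbU ut).trans_lt hU)
      ((gagliardoIntegral_mono s p hbV vt).trans_lt hV) ?_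
    intro a ha
    have h1 := ae_restrict_of_ae_restrict_of_subset
      ((sdiff_subset (s := Metric.ball x r) (t := A)).trans (hbU.trans hUΩ)) hπ
    filter_upwards [h1, ae_restrict_mem (measurableSet_ball.diff hA)] with y hy hyA
    by_contra hcon
    push Not at hcon
    apply hyA.2
    refine (hfib _ _ ((hτ _).trans hy) ?_).symm
    have h2 := (hdeckiso τ hτ).dist_eq (ut a) (ut y)
    have h3 := dist_triangle_left (τ (ut y)) (vt y) (vt a)
    have ha' : vt a = τ (ut a) := ha
    have h4 := hcon.2
    rw [ha'] at h3 h4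
    rw [h2] at h3
    linarith [hcon.1]
  -- connectedness
  let O₁ : Set (EuclideanSpace ℝ (Fin m)) :=
    {x | ∃ r > 0, volume (Metric.ball x r \ A) = 0}
  let O₂ : Set (EuclideanSpace ℝ (Fin m)) :=
    {x | ∃ r > 0, volume (Metric.ball x r ∩ A) = 0}
  have hsubball : ∀ (x y : EuclideanSpace ℝ (Fin m)) (r : ℝ), y ∈ Metric.ball x r →
      ∃ r' > 0, Metric.ball y r' ⊆ Metric.ball x r := fun x y r hy =>
    Metric.isOpen_iff.1 Metric.isOpen_ball y hy
  have hO₁ : IsOpen O₁ := by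
    refine Metric.isOpen_iff.2 ?_
    rintro x ⟨r, hr, h⟩
    refine ⟨r, hr, fun y hy => ?_⟩
    obtain ⟨r', hr', hsub⟩ := hsubball x y r hy
    exact ⟨r', hr', measure_mono_null (sdiff_subset_sdiff_left hsub) h⟩
  have hO₂ : IsOpen O₂ := by
    refine Metric.isOpen_iff.2 ?_
    rintro x ⟨r, hr, h⟩
    refine ⟨r, hr, fun y hy => ?_⟩
    obtain ⟨r', hr', hsub⟩ := hsubball x y r hy
    exact ⟨r', hr', measure_mono_null (inter_subset_inter_left _ hsub) h⟩
  have hdisj : Disjoint O₁ O₂ := by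
    rw [Set.disjoint_left]
    rintro x ⟨r, hr, h⟩ ⟨r', hr', h'⟩
    have hpos' := Metric.measure_ball_pos volume x (lt_min hr hr')
    have hle : Metric.ball x (min r r') ⊆ (Metric.ball x r \ A) ∪ (Metric.ball x r' ∩ A) := by
      intro y hy
      by_cases hyA : y ∈ A
      · exact Or.inr ⟨Metric.ball_subset_ball (min_le_right _ _) hy, hyA⟩
      · exact Or.inl ⟨Metric.ball_subset_ball (min_le_left _ _) hy, hyA⟩
    exact hpos'.ne' (measure_mono_null hle (measure_union_null h h'))
  have hcover : Ω ⊆ O₁ ∪ O₂ := by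
    intro x hx
    obtain ⟨r, hr, -, h | h⟩ := hloc x hx
    · exact Or.inr ⟨r, hr, h⟩
    · exact Or.inl ⟨r, hr, h⟩
  have hne : (Ω ∩ O₁).Nonempty := by
    by_contra hemp
    rw [Set.not_nonempty_iff_eq_empty] at hemp
    apply hpos
    refine measure_null_of_locally_null _ fun x hx => ?_
    rcases hcover hx.1 with h | ⟨r, hr, h⟩
    · have : x ∈ Ω ∩ O₁ := ⟨hx.1, h⟩
      rw [hemp] at this
      exact absurd this (notMem_empty x)
    · refine ⟨Metric.ball x r ∩ (Ω ∩ A),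
        Filter.inter_mem (mem_nhdsWithin_of_mem_nhds (Metric.ball_mem_nhds x hr))
          self_mem_nhdsWithin, ?_⟩
      exact measure_mono_null (inter_subset_inter_right _ inter_subset_right) h
  have hsub : Ω ⊆ O₁ :=
    IsPreconnected.subset_left_of_subset_union hO₁ hO₂ hdisj hcover hne hΩc.isPreconnected
  have hfinal : volume (Ω \ A) = 0 := by
    refine measure_null_of_locally_null _ fun x hx => ?_
    obtain ⟨r, hr, h⟩ := hsub hx.1
    refine ⟨Metric.ball x r ∩ (Ω \ A),
      Filter.inter_mem (mem_nhdsWithin_of_mem_nhds (Metric.ball_mem_nhds x hr))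
        self_mem_nhdsWithin, ?_⟩
    have hss : Metric.ball x r ∩ (Ω \ A) ⊆ Metric.ball x r \ A := fun y hy => ⟨hy.1, hy.2.2⟩
    exact measure_mono_null hss h
  rw [ae_restrict_iff' hΩo.measurableSet, ae_iff]
  refine measure_mono_null (fun y hy => ?_) hfinal
  have hy' : ¬ (y ∈ Ω → vt y = τ (ut y)) := hy
  push Not at hy'
  exact hy'
end

section
/- Let 0<s<1 and 1≤p<∞ satisfy sp ≥ 1, and let m ≥ 1. Let (Ñ, d_Ñ) and (N, d_N) be metric spaces with Ñ connected, and let π : Ñ → N be a topological covering map which is nonexpansive and an isometry at scale ρ>0 (d_N(π(a),π(b)) ≤ d_Ñ(a,b) for all a,b, with equality whenever d_Ñ(a,b) ≤ ρ). Assume some fiber of π is at most countable, every deck transformation (homeomorphism τ : Ñ → Ñ with π ∘ τ = π) is an isometry, and the covering is normal (for all a,b ∈ Ñ with π(a)=π(b) there is a deck transformation sending a to b). Let Ω ⊆ ℝ^m be a connected open set and let ũ : Ω → Ñ be a Borel measurable map in W^{s,p}_loc(Ω, Ñ) with ∫_Ω∫_Ω d_Ñ(ũ(x),ũ(y))^p/|x-y|^{m+sp}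 dx dy = ∞. Then there is no Borel measurable map ṽ : Ω → Ñ with ∫_Ω∫_Ω d_Ñ(ṽ(x),ṽ(y))^p/|x-y|^{m+sp} dx dy < ∞ and π ∘ ṽ = π ∘ ũ almost everywhere on Ω. -/
open MeasureTheory Set ENNReal

theorem gnl_tail {m : ℕ} (hm : 1 ≤ m) (F : EuclideanSpace ℝ (Fin m) → ℝ≥0∞) (hFm : Measurable F)
    (hF : ∀ h, 2 ^ m * F h ≤ F ((1 / 2 : ℝ) • h)) (R : ℝ) (hR : 0 < R)
    (hfin : ∫⁻ h in Metric.ball 0 R, F h < ∞) : ∫⁻ h in Metric.ball 0 R, F h = 0 := by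
  have step : ∀ r : ℝ, ∫⁻ h in Metric.ball 0 r, F h ≤ ∫⁻ h in Metric.ball 0 (r / 2), F h := by
    intro r
    have h1 : ∫⁻ h, (Metric.ball (0 : EuclideanSpace ℝ (Fin m)) (r / 2)).indicator F
        ((1 / 2 : ℝ) • h) = 2 ^ m * ∫⁻ h in Metric.ball 0 (r / 2), F h := by
      rw [← lintegral_indicator Metric.isOpen_ball.measurableSet]
      have hmap := Measure.map_addHaar_smul (volume : Measure (EuclideanSpace ℝ (Fin m)))
        (r := (1 / 2 : ℝ)) (by norm_num)
      have := lintegral_map (μ := (volume : Measure (EuclideanSpace ℝ (Fin m))))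
        (f := (Metric.ball (0 : EuclideanSpace ℝ (Fin m)) (r / 2)).indicator F)
        (g := fun h => (1 / 2 : ℝ) • h)
        (hFm.indicator Metric.isOpen_ball.measurableSet) (by fun_prop)
      rw [← this]
      change ∫⁻ a, _ ∂(Measure.map ((1 / 2 : ℝ) • ·) volume) = _
      rw [hmap, lintegral_smul_measure]
      congr 1
      simp
    have h2 : 2 ^ m * ∫⁻ h in Metric.ball 0 r, F h ≤
        2 ^ m * ∫⁻ h in Metric.ball 0 (r / 2), F h := by
      rw [← h1, ← lintegral_indicator Metric.isOpen_ball.measurableSet,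
        ← lintegral_const_mul _ (hFm.indicator Metric.isOpen_ball.measurableSet)]
      refine lintegral_mono fun h => ?_
      by_cases hh : h ∈ Metric.ball (0 : EuclideanSpace ℝ (Fin m)) r
      · have hh' : (1 / 2 : ℝ) • h ∈ Metric.ball (0 : EuclideanSpace ℝ (Fin m)) (r / 2) := by
          rw [mem_ball_zero_iff] at hh ⊢
          rw [norm_smul]; norm_num; linarith
        simp only [indicator_of_mem hh, indicator_of_mem hh']
        exact hF h
      · simp [indicator_of_notMem hh]
    exact (ENNReal.mul_le_mul_iff_right (by simp) (by finiteness)).1 h2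
  have iter : ∀ n : ℕ, ∫⁻ h in Metric.ball 0 R, F h ≤
      ∫⁻ h in Metric.ball 0 (R / 2 ^ n), F h := by
    intro n
    induction n with
    | zero => simp
    | succ n ih =>
      refine ih.trans ((step _).trans_eq ?_)
      rw [pow_succ, div_div]
  have hvol : Filter.Tendsto (fun n : ℕ => (volume.restrict (Metric.ball 0 R))
      (Metric.ball (0 : EuclideanSpace ℝ (Fin m)) (R / 2 ^ n))) Filter.atTop (nhds 0) := by
    have hb : ∀ n : ℕ, (volume.restrict (Metric.ball 0 R))
        (Metric.ball (0 : EuclideanSpace ℝ (Fin m)) (R / 2 ^ n)) ≤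
        ENNReal.ofReal ((R / 2 ^ n) ^ m) * volume (Metric.ball (0 : EuclideanSpace ℝ (Fin m)) 1) := by
      intro n
      refine (Measure.restrict_apply_le _ _).trans ?_
      rw [Measure.addHaar_ball_of_pos _ _ (by positivity)]
      simp
    refine tendsto_of_tendsto_of_tendsto_of_le_of_le tendsto_const_nhds ?_ (fun _ => zero_le) hb
    have h0 : Filter.Tendsto (fun n : ℕ => (R / 2 ^ n) ^ m) Filter.atTop (nhds 0) := by
      have h00 : Filter.Tendsto (fun n : ℕ => R / (2 : ℝ) ^ n) Filter.atTop (nhds 0) :=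
        tendsto_const_nhds.div_atTop (tendsto_pow_atTop_atTop_of_one_lt (by norm_num))
      simpa [show m ≠ 0 by omega] using h00.pow m
    have h3 := ENNReal.Tendsto.mul_const (ENNReal.tendsto_ofReal h0)
      (b := volume (Metric.ball (0 : EuclideanSpace ℝ (Fin m)) 1)) (Or.inr measure_ball_lt_top.ne)
    simpa using h3
  have hlim := tendsto_setLIntegral_zero (μ := volume.restrict (Metric.ball 0 R)) hfin.ne hvol
  refine le_antisymm (ge_of_tendsto' hlim fun n => ?_) zero_le
  refine (iter n).trans (le_of_eq ?_)
  rw [Measure.restrict_restrict Metric.isOpen_ball.measurableSet,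
    inter_eq_left.2 (Metric.ball_subset_ball (div_le_self hR.le (one_le_pow₀ (by norm_num))))]

/-- The basic kernel form. -/
theorem gnl_tail' {m : ℕ} (hm : 1 ≤ m) (α : ℝ) (hα : (m : ℝ) + 1 ≤ α)
    (φ : EuclideanSpace ℝ (Fin m) → ℝ≥0∞) (hφm : Measurable φ)
    (hφ : ∀ h, φ ((2 : ℝ) • h) ≤ 2 * φ h) (R : ℝ) (hR : 0 < R)
    (hfin : ∫⁻ h in Metric.ball 0 R, φ h / ‖h‖ₑ ^ α < ∞) :
    ∀ᵐ h ∂(volume.restrict (Metric.ball 0 R)), φ h = 0 := by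
  have hα0 : 0 ≤ α := le_trans (by positivity) hα
  have hmeas : Measurable fun h : EuclideanSpace ℝ (Fin m) => φ h / ‖h‖ₑ ^ α := by fun_prop
  have h0 := gnl_tail hm (fun h => φ h / ‖h‖ₑ ^ α) hmeas ?_ R hR hfin
  · rw [lintegral_eq_zero_iff hmeas] at h0
    filter_upwards [h0] with h hh
    have hh' : φ h / ‖h‖ₑ ^ α = 0 := hh
    rw [ENNReal.div_eq_zero_iff] at hh'
    refine hh'.resolve_right ?_
    exact ENNReal.rpow_ne_top_of_nonneg hα0 enorm_ne_top
  · intro h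
    have e1 : ‖(1 / 2 : ℝ) • h‖ₑ ^ α = (2⁻¹ : ℝ≥0∞) ^ α * ‖h‖ₑ ^ α := by
      rw [enorm_smul, ENNReal.mul_rpow_of_nonneg _ _ hα0]
      congr 2
      rw [Real.enorm_eq_ofReal (by norm_num), one_div, ENNReal.ofReal_inv_of_pos (by norm_num)]
      simp
    have e2 : φ h ≤ 2 * φ ((1 / 2 : ℝ) • h) := by
      have := hφ ((1 / 2 : ℝ) • h)
      rwa [smul_smul, show (2 : ℝ) * (1 / 2) = 1 by norm_num, one_smul] at this
    have e3 : (2 : ℝ≥0∞) ^ m * 2 ≤ (2 : ℝ≥0∞) ^ α := by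
      rw [← pow_succ, ← ENNReal.rpow_natCast]
      exact ENNReal.rpow_le_rpow_of_exponent_le (by norm_num) (by push_cast; exact hα)
    rw [e1, ENNReal.inv_rpow, div_eq_mul_inv, div_eq_mul_inv, ENNReal.mul_inv
      (Or.inl (by simp)) (Or.inl (by simp)), inv_inv]
    calc 2 ^ m * (φ h * (‖h‖ₑ ^ α)⁻¹) ≤
        2 ^ m * (2 * φ ((1 / 2 : ℝ) • h) * (‖h‖ₑ ^ α)⁻¹) := by gcongr
      _ = (2 ^ m * 2) * (φ ((1 / 2 : ℝ) • h) * (‖h‖ₑ ^ α)⁻¹) := by ring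
      _ ≤ 2 ^ α * (φ ((1 / 2 : ℝ) • h) * (‖h‖ₑ ^ α)⁻¹) := by gcongr
      _ = _ := by ring

theorem gnl_inner_top {m : ℕ} (hm : 1 ≤ m) (α : ℝ) (hα : (m : ℝ) + 1 ≤ α)
    (U : Set (EuclideanSpace ℝ (Fin m))) (hU : IsOpen U) (x : EuclideanSpace ℝ (Fin m))
    (hx : x ∈ U) : ∫⁻ y in U, 1 / edist x y ^ α = ∞ := by
  by_contra hne
  obtain ⟨R, hR, hRU⟩ := Metric.isOpen_iff.1 hU x hx
  have h1 : ∫⁻ h in Metric.ball (0 : EuclideanSpace ℝ (Fin m)) R, (1 : ℝ≥0∞) / ‖h‖ₑ ^ α < ∞ := by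
    refine lt_of_le_of_lt ?_ (lt_top_iff_ne_top.2 hne)
    refine le_trans (le_of_eq ?_) (lintegral_mono_set hRU)
    rw [← lintegral_indicator Metric.isOpen_ball.measurableSet,
      ← lintegral_indicator Metric.isOpen_ball.measurableSet,
      ← lintegral_add_left_eq_self ((Metric.ball x R).indicator fun y => 1 / edist x y ^ α) x]
    refine lintegral_congr fun h => ?_
    have e : edist x (x + h) = ‖h‖ₑ := by
      rw [edist_comm, edist_eq_enorm_sub, add_sub_cancel_left]
    simp only [indicator, Metric.mem_ball, dist_self_add_left, e]
    simp
  have h2 := gnl_tail' hm α hα (fun _ => 1) measurable_const (fun _ => by norm_num) R hR h1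
  have h3 : volume (Metric.ball (0 : EuclideanSpace ℝ (Fin m)) R) = 0 := by
    simpa [ae_iff] using h2
  exact (Metric.measure_ball_pos volume _ hR).ne' h3

theorem gnl_sets {m : ℕ} (hm : 1 ≤ m) (α : ℝ) (hα : (m : ℝ) + 1 ≤ α)
    (A B : Set (EuclideanSpace ℝ (Fin m))) (hA : MeasurableSet A) (hB : MeasurableSet B)
    (hconv : Convex ℝ (A ∪ B))
    (hfin : ∫⁻ x in A, ∫⁻ y in B, 1 / edist x y ^ α < ∞) : volume A = 0 ∨ volume B = 0 := by
  let φ : EuclideanSpace ℝ (Fin m) → ℝ≥0∞ := fun h => ∫⁻ x, A.indicator 1 x * B.indicator 1 (x + h)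
  have hjm : Measurable fun q : EuclideanSpace ℝ (Fin m) × EuclideanSpace ℝ (Fin m) =>
      (A.indicator 1 q.1 * B.indicator 1 (q.1 + q.2) : ℝ≥0∞) := by
    have hA' : Measurable (A.indicator (1 : EuclideanSpace ℝ (Fin m) → ℝ≥0∞)) :=
      measurable_one.indicator hA
    have hB' : Measurable (B.indicator (1 : EuclideanSpace ℝ (Fin m) → ℝ≥0∞)) :=
      measurable_one.indicator hB
    fun_prop
  have hjx : ∀ h, Measurable fun x => (A.indicator 1 x * B.indicator 1 (x + h) : ℝ≥0∞) :=
    fun h => hjm.comp (measurable_id.prodMk measurable_const)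
  have hφm : Measurable φ := hjm.lintegral_prod_left'
  -- general change of variables
  have key : ∀ k : EuclideanSpace ℝ (Fin m) → ℝ≥0∞, Measurable k →
      ∫⁻ x in A, ∫⁻ y in B, k (y - x) = ∫⁻ h, φ h * k h := by
    intro k hk
    calc ∫⁻ x in A, ∫⁻ y in B, k (y - x)
        = ∫⁻ x, ∫⁻ h, (A.indicator 1 x * B.indicator 1 (x + h)) * k h := by
          rw [← lintegral_indicator hA]
          refine lintegral_congr fun x => ?_
          by_cases hx : x ∈ A
          · rw [indicator_of_mem hx, ← lintegral_indicator hB, ← lintegral_add_left_eq_self _ x]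
            refine lintegral_congr fun h => ?_
            by_cases hh : x + h ∈ B <;> simp [hx, hh]
          · simp [hx]
      _ = ∫⁻ h, ∫⁻ x, (A.indicator 1 x * B.indicator 1 (x + h)) * k h := by
          rw [lintegral_lintegral_swap]
          exact (hjm.mul (hk.comp measurable_snd)).aemeasurable
      _ = _ := by
          refine lintegral_congr fun h => ?_
          rw [lintegral_mul_const _ (hjx h)]
  have hφ : ∀ h, φ ((2 : ℝ) • h) ≤ 2 * φ h := by
    intro h
    have e : φ h = ∫⁻ x, A.indicator 1 (x + h) * B.indicator 1 (x + h + h) :=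
      (lintegral_add_right_eq_self (fun x => (A.indicator 1 x * B.indicator 1 (x + h) : ℝ≥0∞)) h).symm
    calc φ ((2 : ℝ) • h) ≤ ∫⁻ x, (A.indicator 1 x * B.indicator 1 (x + h) +
          A.indicator 1 (x + h) * B.indicator 1 (x + h + h)) := by
          refine lintegral_mono fun x => ?_
          have e2 : x + (2 : ℝ) • h = x + h + h := by rw [two_smul, add_assoc]
          simp only [e2]
          by_cases hx : x ∈ A
          · by_cases hy : x + h + h ∈ B
            · have hmid : x + h ∈ A ∪ B := by
                have := hconv (Or.inl hx) (Or.inr hy) (a := 1 / 2) (b := 1 / 2) (by norm_num)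
                  (by norm_num) (by norm_num)
                convert this using 1
                module
              rcases hmid with hz | hz
              · simp [hx, hy, hz]
              · simp [hx, hy, hz]
            · simp [hy]
          · simp [hx]
      _ = φ h + φ h := by
          rw [lintegral_add_left (hjx h), ← e]
      _ = _ := by rw [two_mul]
  have hfin' : ∫⁻ h, φ h / ‖h‖ₑ ^ α < ∞ := by
    have := key (fun h => 1 / ‖h‖ₑ ^ α) (by fun_prop)
    have e : ∫⁻ h, φ h / ‖h‖ₑ ^ α = ∫⁻ h, φ h * (1 / ‖h‖ₑ ^ α) := by
      simp [div_eq_mul_inv]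
    rw [e, ← this]
    refine lt_of_le_of_lt (le_of_eq ?_) hfin
    refine lintegral_congr fun x => lintegral_congr fun y => ?_
    rw [edist_comm, edist_eq_enorm_sub]
  have hz : ∀ᵐ h, φ h = 0 := by
    have hn : ∀ n : ℕ, ∀ᵐ h ∂(volume.restrict (Metric.ball 0 ((n : ℝ) + 1))), φ h = 0 := fun n =>
      gnl_tail' hm α hα φ hφm hφ _ (by positivity)
        (lt_of_le_of_lt (setLIntegral_le_lintegral _ _) hfin')
    have hu := (ae_restrict_iUnion_iff (μ := volume)
      (fun n : ℕ => Metric.ball (0 : EuclideanSpace ℝ (Fin m)) ((n : ℝ) + 1)) (fun h => φ h = 0)).2 hn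
    have : (⋃ n : ℕ, Metric.ball (0 : EuclideanSpace ℝ (Fin m)) ((n : ℝ) + 1)) = univ := by
      refine eq_univ_of_forall fun x => ?_
      obtain ⟨n, hn⟩ := exists_nat_gt ‖x‖
      refine mem_iUnion.2 ⟨n, ?_⟩
      rw [mem_ball_zero_iff]; linarith
    rwa [this, Measure.restrict_univ] at hu
  have h1 := key (fun _ => 1) measurable_const
  have h2 : ∫⁻ h, φ h * 1 = 0 := by
    rw [lintegral_eq_zero_iff (by fun_prop)]
    filter_upwards [hz] with h hh
    simp [hh]
  rw [h2] at h1
  simp only [lintegral_const, Measure.restrict_apply MeasurableSet.univ, univ_inter, one_mul] at h1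
  rw [mul_eq_zero] at h1
  exact h1.symm

theorem gnl_aesm {m : ℕ} (hm : 1 ≤ m) (s p : ℝ) (hp1 : 1 ≤ p) (hsp : 1 ≤ s * p)
    {X : Type*} [MetricSpace X] [MeasurableSpace X] [BorelSpace X]
    (U : Set (EuclideanSpace ℝ (Fin m))) (hU : IsOpen U)
    (w : EuclideanSpace ℝ (Fin m) → X) (hw : Measurable w)
    (hfin : gagliardoIntegral s p U w < ∞) : AEStronglyMeasurable w (volume.restrict U) := by
  set S : Set X := {a | ∀ r : ℝ, 0 < r → 0 < (volume.restrict U) (w ⁻¹' Metric.closedBall a r)}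
    with hS
  have hSo : IsOpen Sᶜ := by
    rw [Metric.isOpen_iff]
    intro a ha
    simp only [hS, mem_compl_iff, mem_ofPred_eq, not_forall, not_lt, nonpos_iff_eq_zero] at ha
    obtain ⟨r, hr, h0⟩ := ha
    refine ⟨r / 2, by positivity, fun b hb => ?_⟩
    simp only [hS, mem_compl_iff, mem_ofPred_eq, not_forall, not_lt, nonpos_iff_eq_zero]
    refine ⟨r / 2, by positivity, measure_mono_null (preimage_mono ?_) h0⟩
    refine Metric.closedBall_subset_closedBall' ?_
    rw [Metric.mem_ball] at hb
    linarith
  have hinner : ∀ x ∈ U, w x ∈ Sᶜ →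
      ∫⁻ y in U, edist (w x) (w y) ^ p / edist x y ^ ((m : ℝ) + s * p) = ∞ := by
    intro x hx ha
    simp only [hS, mem_compl_iff, mem_ofPred_eq, not_forall, not_lt, nonpos_iff_eq_zero] at ha
    obtain ⟨r, hr, h0⟩ := ha
    have hae : ∀ᵐ y ∂(volume.restrict U), ENNReal.ofReal r ≤ edist (w x) (w y) := by
      rw [ae_iff]
      refine measure_mono_null ?_ h0
      intro y hy
      simp only [mem_ofPred_eq, not_le] at hy
      rw [mem_preimage, Metric.mem_closedBall, dist_comm]
      rw [edist_dist, ENNReal.ofReal_lt_ofReal_iff hr] at hy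
      exact hy.le
    rw [eq_top_iff]
    calc ∞ = ENNReal.ofReal r ^ p * ∫⁻ y in U, 1 / edist x y ^ ((m : ℝ) + s * p) := by
          rw [gnl_inner_top hm _ (by linarith) U hU x hx, ENNReal.mul_top]
          exact (ENNReal.rpow_pos (by simpa using hr) (by simp)).ne'
      _ = ∫⁻ y in U, ENNReal.ofReal r ^ p * (1 / edist x y ^ ((m : ℝ) + s * p)) := by
          rw [lintegral_const_mul]
          fun_prop
      _ ≤ _ := by
          refine lintegral_mono_ae ?_
          filter_upwards [hae] with y hy
          rw [mul_one_div]
          gcongr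
  have hnull : (volume.restrict U) (w ⁻¹' Sᶜ) = 0 := by
    by_contra hne
    have hms : MeasurableSet (w ⁻¹' Sᶜ) := hw hSo.measurableSet
    have : (∞ : ℝ≥0∞) ≤ gagliardoIntegral s p U w := by
      calc (∞ : ℝ≥0∞) = ∫⁻ x in U, (w ⁻¹' Sᶜ).indicator (fun _ => ∞) x := by
            rw [lintegral_indicator_const hms, ENNReal.top_mul hne]
        _ ≤ _ := by
            refine lintegral_mono_ae ?_
            filter_upwards [ae_restrict_mem hU.measurableSet] with x hx
            by_cases hxs : x ∈ w ⁻¹' Sᶜ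
            · rw [hinner x hx hxs]; exact le_top
            · rw [indicator_of_notMem hxs]; exact zero_le
    exact absurd hfin (not_lt.2 this)
  have hsep : TopologicalSpace.IsSeparable S := by
    have hsc : SecondCountableTopology S := by
      refine Metric.secondCountable_of_almost_dense_set fun ε hε => ?_
      obtain ⟨u, -, hud, hcov⟩ := Vitali.exists_disjoint_subfamily_covering_enlargement_closedBall
        (univ : Set S) (fun a => (a : X)) (fun _ => ε / 5) (ε / 5) (fun _ _ => le_rfl) 5
        (by norm_num)
      refine ⟨u, ?_, fun a => ?_⟩
      · have hc := Measure.countable_meas_pos_of_disjoint_iUnion (μ := volume.restrict U)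
          (As := fun i : u => w ⁻¹' Metric.closedBall ((i : S) : X) (ε / 5))
          (fun i => hw Metric.isClosed_closedBall.measurableSet)
          (fun i j hij => (hud i.2 j.2 (fun h => hij (Subtype.ext h))).preimage w)
        have he : {i : u | 0 < (volume.restrict U)
            (w ⁻¹' Metric.closedBall ((i : S) : X) (ε / 5))} = univ :=
          eq_univ_of_forall fun i => (i : S).2 _ (by positivity)
        rw [he, countable_univ_iff] at hc
        exact hc
      · obtain ⟨b, hb, hab⟩ := hcov a (mem_univ _)
        refine ⟨b, hb, ?_⟩
        have := hab (Metric.mem_closedBall_self (by positivity))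
        rw [Metric.mem_closedBall] at this
        rw [Subtype.dist_eq]
        linarith
    exact TopologicalSpace.IsSeparable.of_subtype S
  refine aestronglyMeasurable_iff_aemeasurable_separable.2 ⟨hw.aemeasurable, S, hsep, ?_⟩
  rw [ae_iff]
  exact hnull

theorem gnl_deck {Ntl N : Type*} [MetricSpace Ntl] [MetricSpace N]
    (π : Ntl → N) (ρ : ℝ) (hiso : ∀ a b : Ntl, dist a b ≤ ρ → dist (π a) (π b) = dist a b)
    (a b : Ntl) (h : π a = π b) (hab : dist a b ≤ ρ) : a = b := by
  have := hiso a b hab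
  rw [h, dist_self] at this
  exact dist_eq_zero.1 this.symm

theorem gnl_kernel_meas {m : ℕ} (s p : ℝ) {X : Type*} [MetricSpace X]
    (μ : Measure (EuclideanSpace ℝ (Fin m))) [SFinite μ]
    (w : EuclideanSpace ℝ (Fin m) → X) (hw : AEStronglyMeasurable w μ) :
    AEMeasurable (fun x => ∫⁻ y, edist (w x) (w y) ^ p / edist x y ^ ((m : ℝ) + s * p) ∂μ) μ := by
  have h1 : AEMeasurable (fun q : EuclideanSpace ℝ (Fin m) × EuclideanSpace ℝ (Fin m) =>
      edist (w q.1) (w q.2)) (μ.prod μ) :=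
    (hw.comp_quasiMeasurePreserving Measure.quasiMeasurePreserving_fst).edist
      (hw.comp_quasiMeasurePreserving Measure.quasiMeasurePreserving_snd)
  have h2 : AEMeasurable (fun q : EuclideanSpace ℝ (Fin m) × EuclideanSpace ℝ (Fin m) =>
      edist (w q.1) (w q.2) ^ p / edist q.1 q.2 ^ ((m : ℝ) + s * p)) (μ.prod μ) :=
    (h1.pow_const p).div (by fun_prop)
  exact h2.lintegral_prod_right'

theorem gnl_local (s p : ℝ) (m : ℕ)
    (hp1 : 1 ≤ p) (hsp : 1 ≤ s * p) (hm : 1 ≤ m)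
    {Ntl N : Type*} [MetricSpace Ntl] [MetricSpace N]
    [MeasurableSpace Ntl] [BorelSpace Ntl]
    (π : Ntl → N) (ρ : ℝ) (hρ : 0 < ρ)
    (hiso : ∀ a b : Ntl, dist a b ≤ ρ → dist (π a) (π b) = dist a b)
    (hdeckiso : ∀ τ : Ntl ≃ₜ Ntl, (∀ x, π (τ x) = π x) → Isometry τ)
    (hnormal : ∀ a b : Ntl, π a = π b → ∃ τ : Ntl ≃ₜ Ntl, (∀ x, π (τ x) = π x) ∧ τ a = b)
    (U : Set (EuclideanSpace ℝ (Fin m))) (hUo : IsOpen U) (hUc : Convex ℝ U) (hUn : U.Nonempty)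
    (ut : EuclideanSpace ℝ (Fin m) → Ntl) (hutm : Measurable ut)
    (hut : gagliardoIntegral s p U ut < ∞)
    (vt : EuclideanSpace ℝ (Fin m) → Ntl) (hvtm : Measurable vt)
    (hvt : gagliardoIntegral s p U vt < ∞)
    (hπ : ∀ᵐ x ∂(volume.restrict U), π (vt x) = π (ut x)) :
    ∃ τ : Ntl ≃ₜ Ntl, (∀ x, π (τ x) = π x) ∧ ∀ᵐ x ∂(volume.restrict U), τ (ut x) = vt x := by
  have hus := gnl_aesm hm s p hp1 hsp U hUo ut hutm hut
  have hvs := gnl_aesm hm s p hp1 hsp U hUo vt hvtm hvt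
  obtain ⟨-, t1, ⟨c1, hc1, htc1⟩, ht1⟩ := aestronglyMeasurable_iff_aemeasurable_separable.1 hus
  obtain ⟨-, t2, ⟨c2, hc2, htc2⟩, ht2⟩ := aestronglyMeasurable_iff_aemeasurable_separable.1 hvs
  have hUpos : (volume.restrict U) univ ≠ 0 := by
    rw [Measure.restrict_apply_univ]
    exact (hUo.measure_pos volume hUn).ne'
  obtain ⟨d1, d2, hP⟩ : ∃ d1 d2 : Ntl, (volume.restrict U)
      {x | dist (ut x) d1 < ρ / 8 ∧ dist (vt x) d2 < ρ / 8} ≠ 0 := by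
    by_contra! hcon
    have hn : (volume.restrict U) (⋃ d1 ∈ c1, ⋃ d2 ∈ c2,
        {x | dist (ut x) d1 < ρ / 8 ∧ dist (vt x) d2 < ρ / 8}) = 0 :=
      (measure_biUnion_null_iff hc1).2 fun d1 _ => (measure_biUnion_null_iff hc2).2
        fun d2 _ => hcon d1 d2
    apply hUpos
    rw [← nonpos_iff_eq_zero, ← hn]
    refine measure_mono_ae ?_
    filter_upwards [ht1, ht2] with x h1 h2 _
    obtain ⟨d1, hd1, hx1⟩ := Metric.mem_closure_iff.1 (htc1 h1) (ρ / 8) (by positivity)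
    obtain ⟨d2, hd2, hx2⟩ := Metric.mem_closure_iff.1 (htc2 h2) (ρ / 8) (by positivity)
    exact mem_biUnion hd1 (mem_biUnion hd2 ⟨hx1, hx2⟩)
  obtain ⟨x0, ⟨hx1, hx2⟩, hx0⟩ : ∃ x0, x0 ∈ {x | dist (ut x) d1 < ρ / 8 ∧ dist (vt x) d2 < ρ / 8} ∧
      π (vt x0) = π (ut x0) := by
    by_contra! hcon
    refine hP (measure_mono_null ?_ (ae_iff.1 hπ))
    exact fun x hx => hcon x hx
  obtain ⟨τ, hτ, hτ0⟩ := hnormal _ _ hx0.symm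
  have hτi := hdeckiso τ hτ
  refine ⟨τ, hτ, ?_⟩
  have hτs : AEStronglyMeasurable (fun x => τ (ut x)) (volume.restrict U) :=
    τ.continuous.comp_aestronglyMeasurable hus
  obtain ⟨A1, -, hA1m, hA1⟩ := (hτs.nullMeasurableSet_eq_fun hvs).exists_measurable_superset_ae_eq
  have hA1' : ∀ᵐ x ∂(volume.restrict U), x ∈ A1 ↔ τ (ut x) = vt x := by
    filter_upwards [hA1] with x hx
    exact iff_of_eq hx
  have hgood : ∀ᵐ x ∂(volume.restrict U), (x ∈ A1 ↔ τ (ut x) = vt x) ∧ π (vt x) = π (ut x) :=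
    hA1'.and hπ
  -- the pointwise bound
  have hpt : ∀ x y, τ (ut x) = vt x → τ (ut y) ≠ vt y → π (vt y) = π (ut y) →
      ENNReal.ofReal (ρ / 2) ^ p ≤ edist (ut x) (ut y) ^ p + edist (vt x) (vt y) ^ p := by
    intro x y hx hy hpy
    have : ρ / 2 ≤ dist (ut x) (ut y) ∨ ρ / 2 ≤ dist (vt x) (vt y) := by
      by_contra! hcon
      apply hy
      refine gnl_deck π ρ hiso _ _ ((hτ _).trans hpy.symm) ?_
      have e1 := dist_triangle (τ (ut y)) (vt x) (vt y)
      rw [← hx, hτi.dist_eq, dist_comm (ut y), hx] at e1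
      linarith
    rcases this with h | h
    · refine le_trans ?_ le_self_add
      gcongr
      rw [edist_dist]
      exact ENNReal.ofReal_le_ofReal h
    · refine le_trans ?_ le_add_self
      gcongr
      rw [edist_dist]
      exact ENNReal.ofReal_le_ofReal h
  have hAU : U ∩ A1 ⊆ U := inter_subset_left
  have hBU : U \ A1 ⊆ U := diff_subset
  have hAm : MeasurableSet (U ∩ A1) := hUo.measurableSet.inter hA1m
  have hBm : MeasurableSet (U \ A1) := hUo.measurableSet.diff hA1m
  have hkx : ∀ (w : EuclideanSpace ℝ (Fin m) → Ntl), Measurable w → ∀ x,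
      Measurable fun y => edist (w x) (w y) ^ p / edist x y ^ ((m : ℝ) + s * p) := by
    intro w hw x
    have : Measurable fun y => edist (w x) (w y) :=
      (continuous_const.edist continuous_id).measurable.comp hw
    fun_prop
  have hmain : ENNReal.ofReal (ρ / 2) ^ p *
      ∫⁻ x in U ∩ A1, ∫⁻ y in U \ A1, 1 / edist x y ^ ((m : ℝ) + s * p) < ∞ := by
    calc ENNReal.ofReal (ρ / 2) ^ p *
          ∫⁻ x in U ∩ A1, ∫⁻ y in U \ A1, 1 / edist x y ^ ((m : ℝ) + s * p)
        = ∫⁻ x in U ∩ A1, ∫⁻ y in U \ A1, ENNReal.ofReal (ρ / 2) ^ p *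
            (1 / edist x y ^ ((m : ℝ) + s * p)) := by
          rw [← lintegral_const_mul' _ _ (by finiteness)]
          refine lintegral_congr fun x => ?_
          rw [← lintegral_const_mul' _ _ (by finiteness)]
      _ ≤ ∫⁻ x in U ∩ A1, ∫⁻ y in U \ A1,
            (edist (ut x) (ut y) ^ p / edist x y ^ ((m : ℝ) + s * p) +
              edist (vt x) (vt y) ^ p / edist x y ^ ((m : ℝ) + s * p)) := by
          refine lintegral_mono_ae ?_
          filter_upwards [ae_restrict_of_ae_restrict_of_subset hAU hgood, ae_restrict_mem hAm]
            with x hx hxA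
          refine lintegral_mono_ae ?_
          filter_upwards [ae_restrict_of_ae_restrict_of_subset hBU hgood, ae_restrict_mem hBm]
            with y hy hyB
          rw [mul_one_div, ENNReal.div_add_div_same]
          gcongr
          exact hpt x y (hx.1.1 hxA.2) (fun h => hyB.2 (hy.1.2 h)) hy.2
      _ ≤ ∫⁻ x in U, ∫⁻ y in U,
            (edist (ut x) (ut y) ^ p / edist x y ^ ((m : ℝ) + s * p) +
              edist (vt x) (vt y) ^ p / edist x y ^ ((m : ℝ) + s * p)) :=
          (lintegral_mono_set hAU).trans (lintegral_mono fun x => lintegral_mono_set hBU)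
      _ = gagliardoIntegral s p U ut + gagliardoIntegral s p U vt := by
          unfold gagliardoIntegral
          rw [← lintegral_add_left' (gnl_kernel_meas s p _ ut hus)]
          refine lintegral_congr fun x => ?_
          rw [lintegral_add_left (hkx ut hutm x)]
      _ < ∞ := ENNReal.add_lt_top.2 ⟨hut, hvt⟩
  have hfin : ∫⁻ x in U ∩ A1, ∫⁻ y in U \ A1, 1 / edist x y ^ ((m : ℝ) + s * p) < ∞ := by
    refine ENNReal.lt_top_of_mul_ne_top_right hmain.ne ?_
    exact (ENNReal.rpow_pos (by simpa using hρ) (by simp)).ne'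
  rcases gnl_sets hm _ (by linarith) _ _ hAm hBm (by rwa [inter_union_diff]) hfin with h | h
  · exfalso
    apply hP
    have h' : (volume.restrict U) A1 = 0 := by
      rwa [Measure.restrict_apply hA1m, inter_comm]
    rw [← nonpos_iff_eq_zero, ← h']
    refine measure_mono_ae ?_
    filter_upwards [hgood] with y hy hyP
    refine hy.1.2 (gnl_deck π ρ hiso _ _ ((hτ _).trans hy.2.symm) ?_)
    have e1 := dist_triangle (τ (ut y)) (vt x0) (vt y)
    rw [← hτ0, hτi.dist_eq, hτ0] at e1
    have e2 := dist_triangle_right (ut y) (ut x0) d1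
    have e3 := dist_triangle_right (vt x0) (vt y) d2
    have e4 := hyP.1
    have e5 := hyP.2
    linarith
  · have h' : ∀ᵐ x ∂(volume.restrict U), x ∈ A1 := by
      rw [ae_iff, ← compl_def, Measure.restrict_apply hA1m.compl, inter_comm, ← diff_eq]
      exact h
    filter_upwards [h', hgood] with x hx hg
    exact hg.1.1 hx

/-- **No Sobolev lifting from a bad lifting, for normal coverings.** For `sp ≥ 1`, let
`π : Ñ → N` be a covering map between metric spaces, nonexpansive and an isometry at scale
`ρ > 0`, with `Ñ` connected, some fiber at most countable, all deck transformations
isometries, and the covering normal. If `Ω ⊆ ℝ^m` is a connected open set and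
`ũ ∈ W^{s,p}_loc(Ω,Ñ)` is Borel measurable with infinite Gagliardo double integral on `Ω`,
then no Borel measurable `ṽ` with finite Gagliardo double integral on `Ω` satisfies
`π ∘ ṽ = π ∘ ũ` a.e. on `Ω`. -/
theorem no_sobolev_lifting_normal_covering (s p : ℝ) (m : ℕ) (hs0 : 0 < s) (hs1 : s < 1)
    (hp1 : 1 ≤ p) (hsp : 1 ≤ s * p) (hm : 1 ≤ m)
    {Ntl N : Type*} [MetricSpace Ntl] [MetricSpace N] [ConnectedSpace Ntl]
    [MeasurableSpace Ntl] [BorelSpace Ntl]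
    (π : Ntl → N) (hcov : IsCoveringMap π) (ρ : ℝ) (hρ : 0 < ρ)
    (hnonexp : ∀ a b : Ntl, dist (π a) (π b) ≤ dist a b)
    (hiso : ∀ a b : Ntl, dist a b ≤ ρ → dist (π a) (π b) = dist a b)
    (hfiber : ∃ y₀ : N, (π ⁻¹' {y₀}).Countable)
    (hdeckiso : ∀ τ : Ntl ≃ₜ Ntl, (∀ x, π (τ x) = π x) → Isometry τ)
    (hnormal : ∀ a b : Ntl, π a = π b → ∃ τ : Ntl ≃ₜ Ntl, (∀ x, π (τ x) = π x) ∧ τ a = b)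
    (Ω : Set (EuclideanSpace ℝ (Fin m))) (hΩo : IsOpen Ω) (hΩc : IsConnected Ω)
    (ut : EuclideanSpace ℝ (Fin m) → Ntl) (hutm : Measurable ut)
    (hutloc : MemWsplocOn s p Ω ut) (hutinf : gagliardoIntegral s p Ω ut = ∞) :
    ¬ ∃ vt : EuclideanSpace ℝ (Fin m) → Ntl, Measurable vt ∧
        gagliardoIntegral s p Ω vt < ∞ ∧
        ∀ᵐ x ∂(volume.restrict Ω), π (vt x) = π (ut x) := by
  rintro ⟨vt, hvtm, hvt, hπ⟩
  have hmono : ∀ (w : EuclideanSpace ℝ (Fin m) → Ntl) (U V : Set (EuclideanSpace ℝ (Fin m))),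
      U ⊆ V → gagliardoIntegral s p U w ≤ gagliardoIntegral s p V w := fun w U V h =>
    (lintegral_mono_set h).trans (lintegral_mono fun x => lintegral_mono_set h)
  let O : (Ntl ≃ₜ Ntl) → Set (EuclideanSpace ℝ (Fin m)) := fun τ =>
    {x | ∃ V, IsOpen V ∧ x ∈ V ∧ ∀ᵐ y ∂(volume.restrict V), τ (ut y) = vt y}
  have hOo : ∀ τ, IsOpen (O τ) := by
    intro τ
    rw [isOpen_iff_forall_mem_open]
    rintro x ⟨V, hVo, hxV, hV⟩
    exact ⟨V, fun y hy => ⟨V, hVo, hy, hV⟩, hVo, hxV⟩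
  have hex : ∀ x ∈ Ω, ∃ τ : Ntl ≃ₜ Ntl, (∀ x, π (τ x) = π x) ∧ x ∈ O τ := by
    intro x hx
    obtain ⟨U, hUo, hxU, hUΩ, hUf⟩ := hutloc x hx
    obtain ⟨r, hr, hrU⟩ := Metric.isOpen_iff.1 hUo x hxU
    obtain ⟨τ, hτ, h⟩ := gnl_local s p m hp1 hsp hm π ρ hρ hiso hdeckiso hnormal
      (Metric.ball x r) Metric.isOpen_ball (convex_ball x r) ⟨x, Metric.mem_ball_self hr⟩
      ut hutm ((hmono _ _ _ hrU).trans_lt hUf) vt hvtm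
      ((hmono _ _ _ (hrU.trans hUΩ)).trans_lt hvt)
      (ae_restrict_of_ae_restrict_of_subset (hrU.trans hUΩ) hπ)
    exact ⟨τ, hτ, _, Metric.isOpen_ball, Metric.mem_ball_self hr, h⟩
  obtain ⟨x0, hx0⟩ := hΩc.nonempty
  obtain ⟨τ, hτ, hxτ⟩ := hex x0 hx0
  let O' : Set (EuclideanSpace ℝ (Fin m)) :=
    ⋃ σ ∈ {σ : Ntl ≃ₜ Ntl | (∀ x, π (σ x) = π x) ∧ σ ≠ τ}, O σ
  have hO'o : IsOpen O' := isOpen_biUnion fun σ _ => hOo σ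
  have hdisj : Disjoint (O τ) O' := by
    rw [Set.disjoint_left]
    intro x hx hx'
    obtain ⟨σ, ⟨hσ, hne⟩, hxσ⟩ := mem_iUnion₂.1 hx'
    obtain ⟨V, hVo, hxV, hV⟩ := hx
    obtain ⟨W, hWo, hxW, hW⟩ := hxσ
    have h1 := ae_restrict_of_ae_restrict_of_subset (inter_subset_left (s := V) (t := W)) hV
    have h2 := ae_restrict_of_ae_restrict_of_subset (inter_subset_right (s := V) (t := W)) hW
    have hpos : volume (V ∩ W) ≠ 0 := ((hVo.inter hWo).measure_pos volume ⟨x, hxV, hxW⟩).ne'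
    have : (ae (volume.restrict (V ∩ W))).NeBot := by
      rw [ae_neBot, Ne, Measure.restrict_eq_zero]
      exact hpos
    obtain ⟨y, hy1, hy2⟩ := (h1.and h2).exists
    apply hne
    have := hcov.eq_of_comp_eq σ.continuous τ.continuous
      (funext fun z => (hσ z).trans (hτ z).symm) (ut y) (hy2.trans hy1.symm)
    exact Homeomorph.ext (congrFun this)
  have hsub : Ω ⊆ O τ := by
    refine hΩc.isPreconnected.subset_left_of_subset_union (hOo τ) hO'o hdisj ?_ ⟨x0, hx0, hxτ⟩
    intro x hx
    obtain ⟨σ, hσ, hxσ⟩ := hex x hx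
    by_cases h : σ = τ
    · exact Or.inl (h ▸ hxσ)
    · exact Or.inr (mem_biUnion (show σ ∈ {σ : Ntl ≃ₜ Ntl | (∀ x, π (σ x) = π x) ∧ σ ≠ τ} from
        ⟨hσ, h⟩) hxσ)
  have hae : ∀ᵐ x ∂(volume.restrict Ω), τ (ut x) = vt x := by
    rw [ae_restrict_iff' hΩo.measurableSet, ae_iff]
    refine measure_null_of_locally_null _ fun x hx => ?_
    have hxΩ : x ∈ Ω := by
      by_contra h
      exact hx fun h' => absurd h' h
    obtain ⟨V, hVo, hxV, hV⟩ := hsub hxΩ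
    rw [ae_restrict_iff' hVo.measurableSet, ae_iff] at hV
    refine ⟨V ∩ {a | ¬ (a ∈ Ω → τ (ut a) = vt a)}, ?_, measure_mono_null ?_ hV⟩
    · exact Filter.inter_mem (mem_nhdsWithin_of_mem_nhds (hVo.mem_nhds hxV)) self_mem_nhdsWithin
    · rintro y ⟨hyV, hy⟩ h
      exact hy fun _ => h hyV
  have heq : gagliardoIntegral s p Ω vt = gagliardoIntegral s p Ω ut := by
    unfold gagliardoIntegral
    refine lintegral_congr_ae ?_
    filter_upwards [hae] with x hx
    refine lintegral_congr_ae ?_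
    filter_upwards [hae] with y hy
    rw [← hx, ← hy, (hdeckiso τ hτ).edist_eq]
  rw [heq, hutinf] at hvt
  exact lt_irrefl _ hvt
end

section
/- Let 0<s<1 and 1≤p<∞ satisfy sp ≥ 1, and let m ≥ 1. Let (Ñ, d_Ñ) and (N, d_N) be metric spaces and let π : Ñ → N be a topological covering map which is nonexpansive (d_N(π(a),π(b)) ≤ d_Ñ(a,b) for all a,b) and a local isometry in the sense that every point a ∈ Ñ has ε(a) > 0 such that d_N(π(x),π(y)) = d_Ñ(x,y) for all x,y in the open ball B(a, ε(a)) ⊆ Ñ. Let Ω ⊆ ℝ^m be a connected open set, let ũ : Ω → Ñ be continuous and in W^{s,p}_loc(Ω, Ñ), and let ṽ : Ω → Ñ be Borel measurable and in W^{s,p}_loc(Ω, Ñ), with π ∘ ũ = π ∘ ṽ almost everywhere on Ω. Then either ũ = ṽ almost everywhere on Ω, or ũ(x) ≠ ṽ(x) for almost every x ∈ Ω. -/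
open MeasureTheory Set ENNReal Metric

lemma lint_midpoint {m : ℕ} (x : EuclideanSpace ℝ (Fin m)) (f : EuclideanSpace ℝ (Fin m) → ℝ≥0∞)
    (hf : Measurable f) : ∫⁻ y, f (midpoint ℝ x y) = 2 ^ m * ∫⁻ y, f y := by
  have h1 : ∀ y, midpoint ℝ x y = (2⁻¹:ℝ) • x + (2⁻¹:ℝ) • y := by
    intro y; rw [midpoint_eq_smul_add]; simp
  simp_rw [h1]
  have h2 : ∫⁻ y, f ((2⁻¹:ℝ) • x + (2⁻¹:ℝ) • y) =
     ∫⁻ u, f ((2⁻¹:ℝ) • x + u) ∂(Measure.map (fun y : EuclideanSpace ℝ (Fin m) => (2⁻¹:ℝ) • y) volume) := by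
    rw [lintegral_map (by fun_prop) (by fun_prop)]
  rw [h2, Measure.map_addHaar_smul volume (by norm_num), lintegral_smul_measure,
    lintegral_add_left_eq_self]
  simp

def DD {E : Type*} (A C : Set E) : Set (E × E) := A ×ˢ C ∪ C ×ˢ A

noncomputable def kk {m : ℕ} (t R : ℝ) (A C : Set (EuclideanSpace ℝ (Fin m)))
    (x y : EuclideanSpace ℝ (Fin m)) : ℝ≥0∞ :=
  (DD A C ∩ {z | dist z.1 z.2 < R}).indicator (fun z => edist z.1 z.2 ^ (-t)) (x, y)

lemma kk_meas {m : ℕ} (t R : ℝ) {A C : Set (EuclideanSpace ℝ (Fin m))}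
    (hA : MeasurableSet A) (hC : MeasurableSet C) :
    Measurable (Function.uncurry (kk t R A C)) := by
  have : Function.uncurry (kk t R A C) = (DD A C ∩ {z | dist z.1 z.2 < R}).indicator
      (fun z => edist z.1 z.2 ^ (-t)) := by
    ext ⟨x, y⟩; rfl
  rw [this]
  apply Measurable.indicator
  · fun_prop
  · exact ((hA.prod hC).union (hC.prod hA)).inter
      (measurableSet_lt (by fun_prop) (by fun_prop))

lemma kk_point {m : ℕ} (t R : ℝ) {A C : Set (EuclideanSpace ℝ (Fin m))}
    (hconv : Convex ℝ (A ∪ C)) (x y : EuclideanSpace ℝ (Fin m)) :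
    kk t R A C x y ≤ 2 ^ (-t) *
      (kk t (R / 2) A C x (midpoint ℝ x y) + kk t (R / 2) A C y (midpoint ℝ x y)) := by
  by_cases h : (x, y) ∈ DD A C ∩ {z | dist z.1 z.2 < R}
  · obtain ⟨hD, hR⟩ := h
    simp only [mem_ofPred_eq] at hR
    have hx : x ∈ A ∪ C := by rcases hD with h | h <;> simp [h.1]
    have hy : y ∈ A ∪ C := by
      rcases hD with h | h
      · exact Or.inr h.2
      · exact Or.inl h.2
    have hz : midpoint ℝ x y ∈ A ∪ C := hconv.midpoint_mem hx hy
    have d1 : dist x (midpoint ℝ x y) = dist x y / 2 := by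
      rw [dist_left_midpoint]; simp; ring
    have d2 : dist y (midpoint ℝ x y) = dist x y / 2 := by
      rw [dist_right_midpoint]; simp; ring
    have key : ∀ w, dist w (midpoint ℝ x y) = dist x y / 2 → (w, midpoint ℝ x y) ∈ DD A C →
        kk t R A C x y ≤ 2 ^ (-t) * kk t (R / 2) A C w (midpoint ℝ x y) := by
      intro w hw hwD
      have e : edist x y = 2 * edist w (midpoint ℝ x y) := by
        have h2 : (2 : ℝ≥0∞) = ENNReal.ofReal 2 := by simp
        have h3 : ∀ d : ℝ, ENNReal.ofReal d = 2 * ENNReal.ofReal (d / 2) := by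
          intro d
          rw [h2, ← ENNReal.ofReal_mul (by norm_num)]
          congr 1; ring
        rw [edist_dist, edist_dist, hw]
        exact h3 _
      unfold kk
      have hm1 : (x, y) ∈ DD A C ∩ {z | dist z.1 z.2 < R} := ⟨hD, hR⟩
      have hm2 : (w, midpoint ℝ x y) ∈ DD A C ∩ {z | dist z.1 z.2 < R / 2} := by
        refine ⟨hwD, ?_⟩
        simp only [mem_ofPred_eq, hw]; linarith
      rw [indicator_of_mem hm1, indicator_of_mem hm2]
      simp only [e]
      rw [ENNReal.mul_rpow_of_ne_top (by simp) (edist_ne_top _ _)]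
    have hd : (x, midpoint ℝ x y) ∈ DD A C ∨ (y, midpoint ℝ x y) ∈ DD A C := by
      unfold DD at *
      simp only [mem_union, mem_prod] at *
      tauto
    rcases hd with hd | hd
    · exact (key x d1 hd).trans (by gcongr; exact le_self_add)
    · exact (key y d2 hd).trans (by gcongr; exact le_add_self)
  · unfold kk; rw [indicator_of_notMem h]; exact zero_le

noncomputable def Phi {m : ℕ} (t R : ℝ) (A C : Set (EuclideanSpace ℝ (Fin m))) : ℝ≥0∞ :=
  ∫⁻ x, ∫⁻ y, kk t R A C x y

lemma Phi_le {m : ℕ} (t R : ℝ) (ht : (m : ℝ) + 1 ≤ t) {A C : Set (EuclideanSpace ℝ (Fin m))}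
    (hA : MeasurableSet A) (hC : MeasurableSet C)
    (hconv : Convex ℝ (A ∪ C)) : Phi t R A C ≤ Phi t (R / 2) A C := by
  have hm := kk_meas t (R / 2) hA hC
  have hmid : Measurable fun z : EuclideanSpace ℝ (Fin m) × EuclideanSpace ℝ (Fin m) =>
      midpoint ℝ z.1 z.2 := by
    simp_rw [midpoint_eq_smul_add]; fun_prop
  have hm1 : Measurable fun z : EuclideanSpace ℝ (Fin m) × EuclideanSpace ℝ (Fin m) =>
      kk t (R / 2) A C z.1 (midpoint ℝ z.1 z.2) := hm.comp (measurable_fst.prodMk hmid)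
  have hm2 : Measurable fun z : EuclideanSpace ℝ (Fin m) × EuclideanSpace ℝ (Fin m) =>
      kk t (R / 2) A C z.2 (midpoint ℝ z.1 z.2) := hm.comp (measurable_snd.prodMk hmid)
  have I1 : ∫⁻ x, ∫⁻ y, kk t (R / 2) A C x (midpoint ℝ x y) = 2 ^ m * Phi t (R / 2) A C := by
    unfold Phi
    rw [← lintegral_const_mul' _ _ (by simp)]
    congr 1; ext x
    exact lint_midpoint x _ (hm.comp measurable_prodMk_left)
  have I2 : ∫⁻ x, ∫⁻ y, kk t (R / 2) A C y (midpoint ℝ x y) = 2 ^ m * Phi t (R / 2) A C := by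
    rw [lintegral_lintegral_swap hm2.aemeasurable, ← I1]
    simp_rw [midpoint_comm]
  calc Phi t R A C ≤ ∫⁻ x, ∫⁻ y, 2 ^ (-t) *
      (kk t (R / 2) A C x (midpoint ℝ x y) + kk t (R / 2) A C y (midpoint ℝ x y)) :=
        lintegral_mono fun x => lintegral_mono fun y => kk_point t R hconv x y
    _ = 2 ^ (-t) * (2 ^ m * Phi t (R / 2) A C + 2 ^ m * Phi t (R / 2) A C) := by
        have hc : (2 : ℝ≥0∞) ^ (-t) ≠ ∞ := by simp
        simp_rw [lintegral_const_mul' _ _ hc]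
        congr 1
        rw [← I1]
        nth_rewrite 2 [I1]
        rw [← I2, ← lintegral_add_left (hm1.lintegral_prod_right')]
        congr 1; ext x
        exact lintegral_add_left (hm1.comp measurable_prodMk_left) _
    _ = (2 ^ (-t) * 2 ^ ((m : ℝ) + 1)) * Phi t (R / 2) A C := by
        rw [ENNReal.rpow_add _ _ (by simp) (by simp), ENNReal.rpow_natCast, ENNReal.rpow_one]
        ring
    _ ≤ 1 * Phi t (R / 2) A C := by
        gcongr
        rw [← ENNReal.rpow_add _ _ (by simp) (by simp)]
        calc (2:ℝ≥0∞) ^ (-t + ((m : ℝ) + 1)) ≤ 2 ^ (0 : ℝ) :=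
              ENNReal.rpow_le_rpow_of_exponent_le (by norm_num) (by linarith)
          _ = 1 := by simp
    _ = _ := one_mul _

lemma dichotomy {m : ℕ} (t : ℝ) (ht : (m : ℝ) + 1 ≤ t) {A C : Set (EuclideanSpace ℝ (Fin m))}
    (hA : MeasurableSet A) (hC : MeasurableSet C) (hdisj : Disjoint A C)
    (hconv : Convex ℝ (A ∪ C)) (hb : ∀ x ∈ A ∪ C, ∀ y ∈ A ∪ C, dist x y < 1)
    (hfin : Phi t 1 A C ≠ ∞) : volume A = 0 ∨ volume C = 0 := by
  have hE : ∀ R, Phi t R A C = ∫⁻ z, kk t R A C z.1 z.2 ∂(volume.prod volume) := fun R =>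
    (lintegral_prod _ (kk_meas t R hA hC).aemeasurable).symm
  have hle : ∀ n : ℕ, Phi t 1 A C ≤ Phi t (1 / 2 ^ n) A C := by
    intro n
    induction n with
    | zero => simp
    | succ n ih =>
      refine ih.trans ((Phi_le t _ ht hA hC hconv).trans (le_of_eq ?_))
      congr 1; rw [pow_succ]; field_simp
  have hlim : Filter.Tendsto (fun n : ℕ => Phi t (1 / 2 ^ n) A C) Filter.atTop (nhds 0) := by
    simp_rw [hE]
    have := tendsto_lintegral_of_dominated_convergence (μ := (volume.prod volume))
      (F := fun n : ℕ => fun z => kk t (1 / 2 ^ n) A C z.1 z.2) (f := fun _ => 0)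
      (fun z => kk t 1 A C z.1 z.2) (fun n => kk_meas t _ hA hC)
      (fun n => Filter.Eventually.of_forall fun z => ?_) (by rw [← hE]; exact hfin)
      (Filter.Eventually.of_forall fun z => ?_)
    · simpa using this
    · apply indicator_le_indicator_of_subset
      · rintro w ⟨h1, h2⟩
        simp only [mem_ofPred_eq] at h2
        refine ⟨h1, ?_⟩
        simp only [mem_ofPred_eq]
        refine lt_of_lt_of_le h2 ?_
        rw [div_le_one (by positivity)]
        exact one_le_pow₀ (by norm_num)
      · intro; exact zero_le
    · apply tendsto_const_nhds.congr'
      by_cases hD : z ∈ DD A C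
      · have hne : z.1 ≠ z.2 := by
          intro he
          have hd := Set.disjoint_left.1 hdisj
          rcases hD with ⟨h1, h2⟩ | ⟨h1, h2⟩
          · exact hd h1 (he ▸ h2)
          · exact hd h2 (he ▸ h1)
        have hpos : 0 < dist z.1 z.2 := dist_pos.2 hne
        obtain ⟨n, hn⟩ := exists_pow_lt_of_lt_one hpos (show (1/2:ℝ) < 1 by norm_num)
        filter_upwards [Filter.eventually_ge_atTop n] with k hk
        refine (indicator_of_notMem ?_ _).symm
        rintro ⟨_, h2⟩
        simp only [mem_ofPred_eq] at h2
        have : (1/2:ℝ)^k ≤ (1/2)^n := pow_le_pow_of_le_one (by norm_num) (by norm_num) hk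
        rw [one_div_pow] at this
        linarith
      · exact Filter.Eventually.of_forall fun k => (indicator_of_notMem (fun h => hD h.1) _).symm
  have h0 : Phi t 1 A C = 0 := le_antisymm (ge_of_tendsto' hlim hle) zero_le
  rw [hE] at h0
  replace h0 := (lintegral_eq_zero_iff (kk_meas t 1 hA hC)).1 h0
  have hnull : (volume.prod volume) (A ×ˢ C) = 0 := by
    refine measure_mono_null ?_ h0
    rintro ⟨x, y⟩ ⟨hx, hy⟩
    show ¬ (kk t 1 A C x y = 0)
    unfold kk
    have hmem : (x, y) ∈ DD A C ∩ {z | dist z.1 z.2 < 1} :=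
      ⟨Or.inl ⟨hx, hy⟩, hb _ (Or.inl hx) _ (Or.inr hy)⟩
    rw [indicator_of_mem hmem]
    simp only [ENNReal.rpow_eq_zero_iff, not_or, not_and]
    have : 0 ≤ (m:ℝ) := by positivity
    exact ⟨fun _ => by linarith, fun h => absurd h (edist_ne_top _ _)⟩
  rwa [Measure.prod_prod, mul_eq_zero] at hnull

lemma local_step (s p : ℝ) (m : ℕ) (hp1 : 1 ≤ p) (hsp : 1 ≤ s * p)
    {Ntl N : Type*} [MetricSpace Ntl] [MetricSpace N]
    [MeasurableSpace Ntl] [BorelSpace Ntl]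
    (π : Ntl → N)
    (hlociso : ∀ a : Ntl, ∃ ε > 0, ∀ x ∈ ball a ε, ∀ y ∈ ball a ε,
      dist (π x) (π y) = dist x y)
    (Ω : Set (EuclideanSpace ℝ (Fin m))) (hΩo : IsOpen Ω)
    (ut vt : EuclideanSpace ℝ (Fin m) → Ntl)
    (hutc : ContinuousOn ut Ω)
    (hvtm : Measurable vt) (hvtloc : MemWsplocOn s p Ω vt)
    (hπ : ∀ᵐ x ∂(volume.restrict Ω), π (ut x) = π (vt x))
    (x₀ : EuclideanSpace ℝ (Fin m)) (hx₀ : x₀ ∈ Ω) :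
    ∃ r > 0, volume (ball x₀ r ∩ {x | ut x ≠ vt x}) = 0 ∨
      volume (ball x₀ r ∩ {x | ut x = vt x}) = 0 := by
  obtain ⟨ε, hε, hiso⟩ := hlociso (ut x₀)
  obtain ⟨U, hUo, hxU, hUΩ, hfin⟩ := hvtloc x₀ hx₀
  have hcont : ContinuousAt ut x₀ := hutc.continuousAt (hΩo.mem_nhds hx₀)
  obtain ⟨r₁, hr₁, hb₁⟩ := Metric.mem_nhds_iff.1
    (hcont.preimage_mem_nhds (ball_mem_nhds (ut x₀) (half_pos hε)))
  obtain ⟨r₂, hr₂, hb₂⟩ := Metric.mem_nhds_iff.1 (hUo.mem_nhds hxU)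
  let r := min (min r₁ r₂) (1 / 4)
  have hr : 0 < r := by positivity
  have hB1 : ∀ x ∈ ball x₀ r, dist (ut x) (ut x₀) < ε / 2 := fun x hx =>
    mem_ball.1 (hb₁ (ball_subset_ball ((min_le_left _ _).trans (min_le_left _ _)) hx))
  have hB2 : ball x₀ r ⊆ U := (ball_subset_ball ((min_le_left _ _).trans (min_le_right _ _))).trans hb₂
  have hB3 : ∀ x ∈ ball x₀ r, dist x x₀ < 1 / 4 := fun x hx =>
    lt_of_lt_of_le (mem_ball.1 hx) (min_le_right _ _)
  let G := vt ⁻¹' ball (ut x₀) ε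
  have hG : MeasurableSet G := hvtm isOpen_ball.measurableSet
  let A := ball x₀ r ∩ G
  let C := ball x₀ r \ G
  have hA : MeasurableSet A := measurableSet_ball.inter hG
  have hC : MeasurableSet C := measurableSet_ball.diff hG
  have hAC : A ∪ C = ball x₀ r := inter_union_sdiff _ _
  have hiff : ∀ x ∈ ball x₀ r, π (ut x) = π (vt x) → (x ∈ G ↔ ut x = vt x) := by
    intro x hx hpx
    have hu : ut x ∈ ball (ut x₀) ε := mem_ball.2 (by linarith [hB1 x hx])
    constructor
    · intro hv
      have := hiso _ hu _ hv
      rw [hpx, dist_self] at this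
      exact dist_eq_zero.1 this.symm
    · intro h
      show vt x ∈ ball (ut x₀) ε
      rwa [← h]
  have hπU : ∀ᵐ x ∂(volume.restrict U), π (ut x) = π (vt x) := ae_restrict_of_ae_restrict_of_subset hUΩ hπ
  have hdist : ∀ x ∈ A, ∀ y ∈ C, π (ut x) = π (vt x) → ε / 2 ≤ dist (vt x) (vt y) := by
    intro x hx y hy hpx
    have h1 : ut x = vt x := (hiff x hx.1 hpx).1 hx.2
    have h2 := hB1 x hx.1
    rw [h1] at h2
    have h3 : ¬ dist (vt y) (ut x₀) < ε := fun h => hy.2 (mem_ball.2 h)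
    have h4 := dist_triangle_left (vt y) (ut x₀) (vt x)
    linarith
  let c : ℝ≥0∞ := ENNReal.ofReal (ε / 2) ^ p
  have hc0 : c ≠ 0 := by
    have : 0 < c := ENNReal.rpow_pos (by simpa using hε) (by simp)
    exact this.ne'
  have hct : c ≠ ∞ := ENNReal.rpow_ne_top_of_nonneg (by linarith) (by simp)
  let F : EuclideanSpace ℝ (Fin m) → EuclideanSpace ℝ (Fin m) → ℝ≥0∞ :=
    fun x y => edist (vt x) (vt y) ^ p / edist x y ^ ((m : ℝ) + s * p)
  have hkF : ∀ x, π (ut x) = π (vt x) → ∀ y, π (ut y) = π (vt y) →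
      kk ((m : ℝ) + s * p) 1 A C x y ≤ c⁻¹ * F x y := by
    intro x hpx y hpy
    by_cases h : (x, y) ∈ DD A C ∩ {z | dist z.1 z.2 < 1}
    · have hd : ε / 2 ≤ dist (vt x) (vt y) := by
        rcases h.1 with h | h
        · exact hdist x h.1 y h.2 hpx
        · rw [dist_comm]; exact hdist y h.2 x h.1 hpy
      have hcle : c ≤ edist (vt x) (vt y) ^ p := by
        refine ENNReal.rpow_le_rpow ?_ (by linarith)
        rw [edist_dist]; exact ENNReal.ofReal_le_ofReal hd
      unfold kk
      rw [indicator_of_mem h]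
      simp only [F]
      rw [div_eq_mul_inv, ← ENNReal.rpow_neg (edist x y), ← mul_assoc]
      calc edist x y ^ (-((m : ℝ) + s * p)) = (c⁻¹ * c) * edist x y ^ (-((m : ℝ) + s * p)) := by
            rw [ENNReal.inv_mul_cancel hc0 hct, one_mul]
        _ ≤ _ := by gcongr
    · unfold kk; rw [indicator_of_notMem h]; exact zero_le
  have hk0 : ∀ x y, (x ∉ U ∨ y ∉ U) → kk ((m : ℝ) + s * p) 1 A C x y = 0 := by
    intro x y hxy
    refine indicator_of_notMem ?_ _
    rintro ⟨h, -⟩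
    rcases h with ⟨h1, h2⟩ | ⟨h1, h2⟩ <;>
    · have := hB2 h1.1
      have := hB2 h2.1
      tauto
  have hPhi : Phi ((m : ℝ) + s * p) 1 A C ≤ c⁻¹ * gagliardoIntegral s p U vt := by
    have e1 : ∀ x, ∫⁻ y, kk ((m : ℝ) + s * p) 1 A C x y =
        ∫⁻ y in U, kk ((m : ℝ) + s * p) 1 A C x y := by
      intro x
      refine (setLIntegral_eq_of_support_subset ?_).symm
      intro y hy
      by_contra hyU
      exact hy (hk0 x y (Or.inr hyU))
    have e2 : Phi ((m : ℝ) + s * p) 1 A C =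
        ∫⁻ x in U, ∫⁻ y in U, kk ((m : ℝ) + s * p) 1 A C x y := by
      unfold Phi
      simp_rw [e1]
      refine (setLIntegral_eq_of_support_subset ?_).symm
      intro x hx
      by_contra hxU
      refine hx ?_
      simp [hk0 x _ (Or.inl hxU)]
    rw [e2]
    unfold gagliardoIntegral
    rw [← lintegral_const_mul' _ _ (by simpa using hc0)]
    refine lintegral_mono_ae ?_
    filter_upwards [hπU] with x hx
    rw [← lintegral_const_mul' _ _ (by simpa using hc0)]
    refine lintegral_mono_ae ?_
    filter_upwards [hπU] with y hy
    exact hkF x hx y hy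
  have hPhi' : Phi ((m : ℝ) + s * p) 1 A C ≠ ∞ :=
    ne_top_of_le_ne_top (ENNReal.mul_ne_top (by simpa using hc0) hfin.ne) hPhi
  have hdich := dichotomy ((m : ℝ) + s * p) (by linarith) hA hC
    (disjoint_left.2 fun x hx hy => hy.2 hx.2) (hAC ▸ convex_ball x₀ r)
    (by
      rw [hAC]
      intro x hx y hy
      have := dist_triangle_right x y x₀
      linarith [hB3 x hx, hB3 y hy]) hPhi'
  have hbad : volume (ball x₀ r ∩ {x | π (ut x) ≠ π (vt x)}) = 0 := by
    have h := (ae_restrict_iff' hUo.measurableSet).1 hπU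
    refine measure_mono_null ?_ h
    rintro x ⟨hx, hne⟩ hcon
    exact hne (hcon (hB2 hx))
  refine ⟨r, hr, ?_⟩
  rcases hdich with h | h
  · right
    refine measure_mono_null ?_ (measure_union_null h hbad)
    rintro x ⟨hx, he⟩
    simp only [mem_ofPred_eq] at he
    by_cases hp : π (ut x) = π (vt x)
    · exact Or.inl ⟨hx, (hiff x hx hp).2 he⟩
    · exact Or.inr ⟨hx, hp⟩
  · left
    refine measure_mono_null ?_ (measure_union_null h hbad)
    rintro x ⟨hx, he⟩
    simp only [mem_ofPred_eq] at he
    by_cases hp : π (ut x) = π (vt x)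
    · exact Or.inl ⟨hx, fun hg => he ((hiff x hx hp).1 hg)⟩
    · exact Or.inr ⟨hx, hp⟩

lemma isOpen_locnull {m : ℕ} (S : Set (EuclideanSpace ℝ (Fin m))) :
    IsOpen {x | ∃ r > 0, volume (ball x r ∩ S) = 0} := by
  rw [Metric.isOpen_iff]
  rintro x ⟨r, hr, h⟩
  refine ⟨r / 2, half_pos hr, fun y hy => ⟨r / 2, half_pos hr, measure_mono_null ?_ h⟩⟩
  refine inter_subset_inter_left _ (ball_subset_ball' ?_)
  rw [mem_ball] at hy
  linarith

lemma null_of_locnull {m : ℕ} (Ω S : Set (EuclideanSpace ℝ (Fin m)))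
    (h : Ω ⊆ {x | ∃ r > 0, volume (ball x r ∩ S) = 0}) : volume (Ω ∩ S) = 0 := by
  refine measure_null_of_locally_null _ fun x hx => ?_
  obtain ⟨r, hr, h0⟩ := h hx.1
  refine ⟨ball x r ∩ S, ?_, h0⟩
  exact Filter.inter_mem (mem_nhdsWithin_of_mem_nhds (ball_mem_nhds x hr))
    (Filter.mem_of_superset self_mem_nhdsWithin inter_subset_right)

/-- **Uniqueness dichotomy with one continuous lifting, for general coverings.** For
`sp ≥ 1`, let `π : Ñ → N` be a covering map between metric spaces which is nonexpansive and
a local isometry. If `Ω ⊆ ℝ^m` is a connected open set, `ũ : Ω → Ñ` is continuous and in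
`W^{s,p}_loc(Ω,Ñ)`, and `ṽ ∈ W^{s,p}_loc(Ω,Ñ)` is Borel measurable with `π ∘ ũ = π ∘ ṽ`
a.e. on `Ω`, then either `ũ = ṽ` a.e. on `Ω` or `ũ ≠ ṽ` a.e. on `Ω`. -/
theorem lifting_uniqueness_dichotomy_continuous (s p : ℝ) (m : ℕ) (hs0 : 0 < s)
    (hs1 : s < 1) (hp1 : 1 ≤ p) (hsp : 1 ≤ s * p) (hm : 1 ≤ m)
    {Ntl N : Type*} [MetricSpace Ntl] [MetricSpace N]
    [MeasurableSpace Ntl] [BorelSpace Ntl]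
    (π : Ntl → N) (hcov : IsCoveringMap π)
    (hnonexp : ∀ a b : Ntl, dist (π a) (π b) ≤ dist a b)
    (hlociso : ∀ a : Ntl, ∃ ε > 0, ∀ x ∈ ball a ε, ∀ y ∈ ball a ε,
      dist (π x) (π y) = dist x y)
    (Ω : Set (EuclideanSpace ℝ (Fin m))) (hΩo : IsOpen Ω) (hΩc : IsConnected Ω)
    (ut vt : EuclideanSpace ℝ (Fin m) → Ntl)
    (hutc : ContinuousOn ut Ω) (hutloc : MemWsplocOn s p Ω ut)
    (hvtm : Measurable vt) (hvtloc : MemWsplocOn s p Ω vt)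
    (hπ : ∀ᵐ x ∂(volume.restrict Ω), π (ut x) = π (vt x)) :
    (∀ᵐ x ∂(volume.restrict Ω), ut x = vt x) ∨
      (∀ᵐ x ∂(volume.restrict Ω), ut x ≠ vt x) := by
  have hloc := local_step s p m hp1 hsp π hlociso Ω hΩo ut vt hutc hvtm hvtloc hπ
  have hcon := isPreconnected_iff_subset_of_disjoint.1 hΩc.isPreconnected
    {x | ∃ r > 0, volume (ball x r ∩ {x | ut x ≠ vt x}) = 0}
    {x | ∃ r > 0, volume (ball x r ∩ {x | ut x = vt x}) = 0}
    (isOpen_locnull _) (isOpen_locnull _)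
    (by
      intro x hx
      obtain ⟨r, hr, h | h⟩ := hloc x hx
      · exact Or.inl ⟨r, hr, h⟩
      · exact Or.inr ⟨r, hr, h⟩)
    (by
      rw [eq_empty_iff_forall_notMem]
      rintro x ⟨-, ⟨r₁, hr₁, h₁⟩, ⟨r₂, hr₂, h₂⟩⟩
      have hpos : 0 < volume (ball x (min r₁ r₂)) := measure_ball_pos _ _ (lt_min hr₁ hr₂)
      refine hpos.ne' (measure_mono_null ?_ (measure_union_null h₁ h₂))
      intro y hy
      by_cases he : ut y = vt y
      · exact Or.inr ⟨ball_subset_ball (min_le_right _ _) hy, he⟩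
      · exact Or.inl ⟨ball_subset_ball (min_le_left _ _) hy, he⟩)
  rcases hcon with h | h
  · left
    rw [ae_restrict_iff' hΩo.measurableSet]
    refine measure_mono_null ?_ (null_of_locnull Ω _ h)
    intro x hx
    have hx' : ¬ (x ∈ Ω → ut x = vt x) := hx
    push Not at hx'
    exact hx'
  · right
    rw [ae_restrict_iff' hΩo.measurableSet]
    refine measure_mono_null ?_ (null_of_locnull Ω _ h)
    intro x hx
    have hx' : ¬ (x ∈ Ω → ut x ≠ vt x) := hx
    push Not at hx'
    exact hx'
end

section
/- Let 0<s<1 and 1≤p<∞ satisfy sp ≥ 1, and let m ≥ 1. Let (Ñ, d_Ñ) and (N, d_N) be metric spaces and let π : Ñ → N be a topological covering map which is nonexpansive and a local isometry in the sense that every point a ∈ Ñ has ε(a) > 0 such that d_N(π(x),π(y)) = d_Ñ(x,y) for all x,y ∈ B(a, ε(a)). Let Ω ⊆ ℝ^m be a connected open set and let ũ : Ω → Ñ be a continuous map in W^{s,p}_loc(Ω, Ñ) with ∫_Ω∫_Ω d_Ñ(ũ(x),ũ(y))^p/|x-y|^{m+sp} dx dy = ∞. If ṽ : Ω → Ñ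 is Borel measurable with ∫_Ω∫_Ω d_Ñ(ṽ(x),ṽ(y))^p/|x-y|^{m+sp} dx dy < ∞ and π ∘ ṽ = π ∘ ũ almost everywhere on Ω, then ũ(x) ≠ ṽ(x) for almost every x ∈ Ω. -/
open MeasureTheory Set ENNReal Metric

open Filter Topology in
theorem aux_mid {m : ℕ} (x : EuclideanSpace ℝ (Fin m)) (ψ : EuclideanSpace ℝ (Fin m) → ℝ≥0∞)
    (hψ : Measurable ψ) :
    ∫⁻ y, ψ ((1/2 : ℝ) • (x + y)) = 2 ^ m * ∫⁻ z, ψ z := by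
  rw [lintegral_add_left_eq_self (fun y => ψ ((1/2 : ℝ) • y)) x]
  have h := Measure.map_addHaar_smul (volume : Measure (EuclideanSpace ℝ (Fin m)))
    (r := 1/2) (by norm_num)
  have h2 : ∫⁻ y, ψ ((1/2 : ℝ) • y) =
      ∫⁻ z, ψ z ∂(Measure.map ((1/2 : ℝ) • ·) (volume : Measure (EuclideanSpace ℝ (Fin m)))) := by
    rw [lintegral_map hψ (by fun_prop)]
  rw [h2, h, lintegral_smul_measure]
  congr 1
  have : |(((1:ℝ)/2) ^ Module.finrank ℝ (EuclideanSpace ℝ (Fin m)))⁻¹| = 2 ^ m := by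
    rw [abs_of_pos (by positivity)]
    simp
  rw [this, ENNReal.ofReal_pow (by norm_num)]
  simp

theorem aux_edist {m : ℕ} (x y : EuclideanSpace ℝ (Fin m)) :
    edist x y = 2 * edist x ((1/2 : ℝ) • (x + y)) := by
  rw [edist_eq_enorm_sub, edist_eq_enorm_sub]
  have : x - (1/2 : ℝ) • (x + y) = (1/2 : ℝ) • (x - y) := by module
  rw [this, enorm_smul, ← mul_assoc]
  have : (2 : ℝ≥0∞) * ‖(1/2 : ℝ)‖ₑ = 1 := by
    rw [Real.enorm_eq_ofReal (by norm_num), one_div, ENNReal.ofReal_inv_of_pos (by norm_num)]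
    simp [ENNReal.mul_inv_cancel]
  rw [this, one_mul]

theorem aux_kernel {m : ℕ} (t : ℝ) (ht : 0 ≤ t) (x y : EuclideanSpace ℝ (Fin m)) :
    (edist x y ^ t)⁻¹ = (2 ^ t)⁻¹ * (edist x ((1/2 : ℝ) • (x + y)) ^ t)⁻¹ := by
  rw [aux_edist x y, ENNReal.mul_rpow_of_nonneg _ _ ht, ENNReal.mul_inv]
  · left; simp [ENNReal.rpow_eq_zero_iff]
  · left; exact ENNReal.rpow_ne_top_of_nonneg ht (by simp)

/-- the truncated kernel -/
noncomputable def auxPhi {m : ℕ} (t : ℝ) (P Q : Set (EuclideanSpace ℝ (Fin m))) (δ : ℝ≥0∞)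
    (z : EuclideanSpace ℝ (Fin m) × EuclideanSpace ℝ (Fin m)) : ℝ≥0∞ :=
  ((P ×ˢ Q) ∩ {z | edist z.1 z.2 < δ}).indicator (fun z => (edist z.1 z.2 ^ t)⁻¹) z

theorem auxS_meas {m : ℕ} (δ : ℝ≥0∞) : MeasurableSet
    {z : EuclideanSpace ℝ (Fin m) × EuclideanSpace ℝ (Fin m) | edist z.1 z.2 < δ} :=
  measurableSet_lt (by fun_prop) measurable_const

theorem aux_kmeas {m : ℕ} (t : ℝ) : Measurable
    (fun z : EuclideanSpace ℝ (Fin m) × EuclideanSpace ℝ (Fin m) => (edist z.1 z.2 ^ t)⁻¹) := by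
  fun_prop

theorem auxPhi_meas {m : ℕ} (t : ℝ) {P Q : Set (EuclideanSpace ℝ (Fin m))} (δ : ℝ≥0∞)
    (hP : MeasurableSet P) (hQ : MeasurableSet Q) : Measurable (auxPhi t P Q δ) :=
  (aux_kmeas t).indicator ((hP.prod hQ).inter (auxS_meas δ))

theorem auxPhi_le {m : ℕ} (t : ℝ) (ht : 0 ≤ t) {B P Q : Set (EuclideanSpace ℝ (Fin m))}
    (hB : Convex ℝ B) (hPQ : P ∪ Q = B) (δ : ℝ≥0∞) (x y : EuclideanSpace ℝ (Fin m)) :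
    auxPhi t P Q (2 * δ) (x, y) ≤ (2 ^ t)⁻¹ * (auxPhi t P Q δ (x, (1/2 : ℝ) • (x + y))
      + auxPhi t P Q δ ((1/2 : ℝ) • (y + x), y)) := by
  unfold auxPhi
  by_cases h : (x, y) ∈ ((P ×ˢ Q) ∩ {z | edist z.1 z.2 < 2 * δ})
  · rw [indicator_of_mem h]
    obtain ⟨⟨hx, hy⟩, hd⟩ := h
    simp only [mem_setOf_eq] at hx hy hd
    have hxB : x ∈ B := hPQ ▸ Or.inl hx
    have hyB : y ∈ B := hPQ ▸ Or.inr hy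
    have hz : (1/2 : ℝ) • (x + y) ∈ B := by
      rw [smul_add]; exact hB hxB hyB (by norm_num) (by norm_num) (by norm_num)
    have key : ∀ e : ℝ≥0∞, 2 * e < 2 * δ → e < δ := fun e he =>
      lt_of_mul_lt_mul_left' he
    rw [← hPQ] at hz
    rcases hz with hz | hz
    · have hz' : ((1/2 : ℝ) • (y + x), y) ∈ ((P ×ˢ Q) ∩ {z | edist z.1 z.2 < δ}) := by
        refine ⟨⟨by rwa [add_comm], hy⟩, key _ ?_⟩
        simp only
        rw [edist_comm, ← aux_edist, edist_comm]; exact hd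
      rw [indicator_of_mem hz']
      simp only
      rw [edist_comm x y, aux_kernel t ht y x, edist_comm _ y]
      gcongr
      exact le_add_self
    · have hz' : (x, (1/2 : ℝ) • (x + y)) ∈ ((P ×ˢ Q) ∩ {z | edist z.1 z.2 < δ}) := by
        refine ⟨⟨hx, hz⟩, key _ ?_⟩
        simp only
        rw [← aux_edist]; exact hd
      rw [indicator_of_mem hz']
      simp only
      rw [aux_kernel t ht x y]
      gcongr
      exact le_self_add
  · rw [indicator_of_notMem h]; exact zero_le

theorem aux_double {m : ℕ} (σ : ℝ) (hσ : 1 ≤ σ) {B P Q : Set (EuclideanSpace ℝ (Fin m))}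
    (hB : Convex ℝ B) (hPQ : P ∪ Q = B) (hP : MeasurableSet P) (hQ : MeasurableSet Q)
    (δ : ℝ≥0∞) :
    ∫⁻ z, auxPhi (m + σ) P Q (2 * δ) z ≤ ∫⁻ z, auxPhi (m + σ) P Q δ z := by
  have ht : (0:ℝ) ≤ m + σ := by positivity
  set t : ℝ := m + σ with htdef
  have hm := auxPhi_meas t δ hP hQ
  have e1 : ∫⁻ z : EuclideanSpace ℝ (Fin m) × EuclideanSpace ℝ (Fin m),
      auxPhi t P Q δ (z.1, (1/2 : ℝ) • (z.1 + z.2)) = 2 ^ m * ∫⁻ z, auxPhi t P Q δ z := by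
    rw [Measure.volume_eq_prod, lintegral_prod _ (by fun_prop), lintegral_prod _ (by fun_prop),
      ← lintegral_const_mul' _ _ (by simp)]
    congr 1; ext x
    exact aux_mid x (fun z => auxPhi t P Q δ (x, z)) (by fun_prop)
  have e2 : ∫⁻ z : EuclideanSpace ℝ (Fin m) × EuclideanSpace ℝ (Fin m),
      auxPhi t P Q δ ((1/2 : ℝ) • (z.2 + z.1), z.2) = 2 ^ m * ∫⁻ z, auxPhi t P Q δ z := by
    rw [Measure.volume_eq_prod, lintegral_prod_symm _ (by fun_prop),
      lintegral_prod_symm _ (by fun_prop),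
      ← lintegral_const_mul' _ _ (by simp)]
    congr 1; ext y
    exact aux_mid y (fun z => auxPhi t P Q δ (z, y)) (by fun_prop)
  have h2t : ((2:ℝ≥0∞) ^ t)⁻¹ * (2 ^ m * 2) ≤ 1 := by
    rw [mul_comm, ← div_eq_mul_inv]
    apply ENNReal.div_le_of_le_mul
    rw [one_mul, ← pow_succ, ← ENNReal.rpow_natCast]
    apply ENNReal.rpow_le_rpow_of_exponent_le (by norm_num)
    push_cast; linarith
  calc ∫⁻ z, auxPhi t P Q (2 * δ) z
      ≤ ∫⁻ z : EuclideanSpace ℝ (Fin m) × EuclideanSpace ℝ (Fin m),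
        (2 ^ t)⁻¹ * (auxPhi t P Q δ (z.1, (1/2 : ℝ) • (z.1 + z.2))
          + auxPhi t P Q δ ((1/2 : ℝ) • (z.2 + z.1), z.2)) :=
        lintegral_mono fun z => auxPhi_le t ht hB hPQ δ z.1 z.2
    _ = (2 ^ t)⁻¹ * (2 ^ m * 2) * ∫⁻ z, auxPhi t P Q δ z := by
        rw [lintegral_const_mul _ (by fun_prop), lintegral_add_left (by fun_prop), e1, e2]
        ring
    _ ≤ 1 * ∫⁻ z, auxPhi t P Q δ z := by gcongr
    _ = _ := one_mul _

open Filter Topology in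
theorem aux_const {m : ℕ} (σ : ℝ) (hσ : 1 ≤ σ) {B P Q : Set (EuclideanSpace ℝ (Fin m))}
    (hB : Convex ℝ B) (hPQ : P ∪ Q = B) (hd : Disjoint P Q)
    (hP : MeasurableSet P) (hQ : MeasurableSet Q)
    (hfin : ∫⁻ x in P, ∫⁻ y in Q, (edist x y ^ ((m : ℝ) + σ))⁻¹ < ∞) :
    volume P = 0 ∨ volume Q = 0 := by
  set t : ℝ := m + σ with htdef
  have ht : (0:ℝ) ≤ t := by positivity
  set k := fun z : EuclideanSpace ℝ (Fin m) × EuclideanSpace ℝ (Fin m) =>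
    (edist z.1 z.2 ^ t)⁻¹ with hk
  have hkm : Measurable k := aux_kmeas t
  set S : ℝ≥0∞ → Set (EuclideanSpace ℝ (Fin m) × EuclideanSpace ℝ (Fin m)) :=
    fun δ => {z | edist z.1 z.2 < δ}
  have hSm : ∀ δ, MeasurableSet (S δ) := auxS_meas
  set ν : Measure (EuclideanSpace ℝ (Fin m) × EuclideanSpace ℝ (Fin m)) :=
    (volume.restrict (P ×ˢ Q)).withDensity k with hν
  have hνS : ∀ δ, ν (S δ) = ∫⁻ z, auxPhi t P Q δ z := by
    intro δ
    rw [hν, withDensity_apply _ (hSm δ), Measure.restrict_restrict (hSm δ), inter_comm]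
    exact (lintegral_indicator ((hP.prod hQ).inter (hSm δ)) _).symm
  have hfinν : IsFiniteMeasure ν := by
    apply isFiniteMeasure_withDensity
    rw [Measure.volume_eq_prod, ← Measure.prod_restrict, lintegral_prod _ hkm.aemeasurable]
    exact hfin.ne
  have hdouble : ∀ δ, ν (S (2 * δ)) ≤ ν (S δ) := fun δ => by
    rw [hνS, hνS]; exact aux_double σ hσ hB hPQ hP hQ δ
  have hpow : ∀ (n : ℕ) δ, ν (S (2 ^ n * δ)) ≤ ν (S δ) := by
    intro n
    induction n with
    | zero => intro δ; simp
    | succ n ih =>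
      intro δ
      rw [pow_succ, mul_assoc]
      exact (ih _).trans (hdouble δ)
  have hlim : Tendsto (fun n : ℕ => ν (S (2⁻¹ ^ n))) atTop (𝓝 0) := by
    have hanti : Antitone (fun n : ℕ => S (2⁻¹ ^ n)) := by
      intro a b hab z hz
      have hz' : edist z.1 z.2 < 2⁻¹ ^ b := hz
      exact lt_of_lt_of_le hz' (pow_le_pow_of_le_one zero_le (by simp) hab)
    have h := tendsto_measure_iInter_atTop (μ := ν)
      (fun n : ℕ => (hSm (2⁻¹ ^ n)).nullMeasurableSet) hanti ⟨0, measure_ne_top _ _⟩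
    have h0 : ν (⋂ n : ℕ, S (2⁻¹ ^ n)) = 0 := by
      apply withDensity_absolutelyContinuous
      rw [Measure.restrict_apply (MeasurableSet.iInter fun n => hSm _)]
      have hempty : (⋂ n : ℕ, S (2⁻¹ ^ n)) ∩ P ×ˢ Q = ∅ := ?_
      · rw [hempty, measure_empty]
      rw [eq_empty_iff_forall_notMem]
      rintro z ⟨hz, hz2⟩
      rw [mem_iInter] at hz
      have : edist z.1 z.2 ≤ 0 := ge_of_tendsto
        (ENNReal.tendsto_pow_atTop_nhds_zero_of_lt_one (r := 2⁻¹) (by simp))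
        (Eventually.of_forall fun n => le_of_lt (hz n))
      have heq : z.1 = z.2 := edist_le_zero.1 this
      exact disjoint_left.1 hd hz2.1 (heq ▸ hz2.2)
    rwa [h0] at h
  have hS0 : ∀ N : ℕ, ν (S (2 ^ N)) = 0 := by
    intro N
    refine le_antisymm (ge_of_tendsto hlim (Eventually.of_forall fun n => ?_)) zero_le
    refine le_trans (measure_mono ?_) (hpow (N + n) (2⁻¹ ^ n))
    rw [pow_add, mul_assoc, ← mul_pow, ENNReal.mul_inv_cancel (by simp) (by simp), one_pow, mul_one]
  have huniv : ν univ = 0 := by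
    have : (univ : Set (EuclideanSpace ℝ (Fin m) × EuclideanSpace ℝ (Fin m)))
        = ⋃ N : ℕ, S (2 ^ N) := by
      refine (eq_univ_of_forall fun z => mem_iUnion.2 ?_).symm
      obtain ⟨n, hn⟩ := pow_unbounded_of_one_lt (dist z.1 z.2) (one_lt_two)
      refine ⟨n, ?_⟩
      change edist z.1 z.2 < 2 ^ n
      rw [edist_dist, ENNReal.ofReal_lt_iff_lt_toReal dist_nonneg (by simp)]
      simpa using hn
    rw [this]
    exact measure_iUnion_null hS0
  rw [hν, withDensity_apply_eq_zero hkm] at huniv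
  have : {x | k x ≠ 0} = univ := eq_univ_of_forall fun z => by
    simp only [hk, mem_setOf_eq, ne_eq, ENNReal.inv_eq_zero]
    exact ENNReal.rpow_ne_top_of_nonneg ht (edist_ne_top _ _)
  rw [this, univ_inter, Measure.restrict_apply_univ, Measure.volume_eq_prod, Measure.prod_prod] at huniv
  exact mul_eq_zero.1 huniv

theorem aux_local (s p : ℝ) (m : ℕ) (hp1 : 1 ≤ p) (hsp : 1 ≤ s * p)
    {Ntl N : Type*} [MetricSpace Ntl] [MetricSpace N]
    [MeasurableSpace Ntl] [BorelSpace Ntl]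
    (π : Ntl → N)
    (hlociso : ∀ a : Ntl, ∃ ε > 0, ∀ x ∈ ball a ε, ∀ y ∈ ball a ε,
      dist (π x) (π y) = dist x y)
    (Ω : Set (EuclideanSpace ℝ (Fin m))) (hΩo : IsOpen Ω)
    (ut vt : EuclideanSpace ℝ (Fin m) → Ntl)
    (hutc : ContinuousOn ut Ω)
    (hvtm : Measurable vt) (hvtfin : gagliardoIntegral s p Ω vt < ∞)
    (hπ : ∀ᵐ x, x ∈ Ω → π (vt x) = π (ut x)) (x₀ : EuclideanSpace ℝ (Fin m)) (hx₀ : x₀ ∈ Ω) :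
    ∃ r > 0, ball x₀ r ⊆ Ω ∧ (volume (ball x₀ r ∩ {x | ut x = vt x}) = 0 ∨
      volume (ball x₀ r ∩ {x | ut x ≠ vt x}) = 0) := by
  obtain ⟨ε, hε, hiso⟩ := hlociso (ut x₀)
  have hnh : ut ⁻¹' (ball (ut x₀) (ε/2)) ∩ Ω ∈ nhds x₀ :=
    Filter.inter_mem ((hutc.continuousAt (hΩo.mem_nhds hx₀)).preimage_mem_nhds
      (ball_mem_nhds _ (by positivity))) (hΩo.mem_nhds hx₀)
  obtain ⟨r, hr, hrs⟩ := Metric.mem_nhds_iff.1 hnh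
  have hBΩ : ball x₀ r ⊆ Ω := fun x hx => (hrs hx).2
  refine ⟨r, hr, hBΩ, ?_⟩
  set B := ball x₀ r with hBdef
  set V := vt ⁻¹' ball (ut x₀) ε with hV
  have hVm : MeasurableSet V := hvtm measurableSet_ball
  have hBm : MeasurableSet B := measurableSet_ball
  have hu : ∀ x ∈ B, ut x ∈ ball (ut x₀) (ε/2) := fun x hx => (hrs hx).1
  have hsub : ball (ut x₀) (ε/2) ⊆ ball (ut x₀) ε := ball_subset_ball (by linarith)
  have heq : ∀ᵐ x, x ∈ B ∩ V → ut x = vt x := by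
    filter_upwards [hπ] with x hx hxB
    have h1 := hiso _ (hsub (hu x hxB.1)) _ hxB.2
    rw [hx (hBΩ hxB.1), dist_self] at h1
    exact dist_eq_zero.1 h1.symm
  set c : ℝ≥0∞ := ENNReal.ofReal (ε/2) ^ p with hc
  have hc0 : c ≠ 0 := by
    have : ENNReal.ofReal (ε/2) ≠ 0 := by simp [hε]
    simp only [hc, ne_eq, ENNReal.rpow_eq_zero_iff, this, ENNReal.ofReal_ne_top, false_and, or_self,
      not_false_eq_true]
  have hfin : ∫⁻ x in B ∩ V, ∫⁻ y in B \ V, (edist x y ^ ((m : ℝ) + s * p))⁻¹ < ∞ := by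
    have hle : c * ∫⁻ x in B ∩ V, ∫⁻ y in B \ V, (edist x y ^ ((m : ℝ) + s * p))⁻¹
        ≤ gagliardoIntegral s p Ω vt := by
      unfold gagliardoIntegral
      refine (lintegral_const_mul_le _ _).trans ?_
      refine le_trans ?_ (lintegral_mono_set (inter_subset_left.trans hBΩ : B ∩ V ⊆ Ω))
      refine setLIntegral_mono_ae' (hBm.inter hVm) ?_
      filter_upwards [heq] with x hx hxP
      refine (lintegral_const_mul_le _ _).trans ?_
      refine le_trans ?_ (lintegral_mono_set (diff_subset.trans hBΩ : B \ V ⊆ Ω))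
      refine setLIntegral_mono' (hBm.diff hVm) ?_
      intro y hy
      rw [div_eq_mul_inv]
      gcongr
      refine ENNReal.rpow_le_rpow ?_ (by linarith)
      rw [← hx hxP, edist_dist]
      apply ENNReal.ofReal_le_ofReal
      have h1 := mem_ball.1 (hu x hxP.1)
      have h2 : ε ≤ dist (vt y) (ut x₀) := not_lt.1 hy.2
      have h3 := dist_triangle (vt y) (ut x) (ut x₀)
      rw [dist_comm]; linarith
    have := hle.trans_lt hvtfin
    by_contra hcon
    rw [not_lt, top_le_iff] at hcon
    rw [hcon, ENNReal.mul_top hc0] at this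
    exact lt_irrefl _ this
  rcases aux_const (s * p) hsp (convex_ball x₀ r) (inter_union_sdiff B V)
    (disjoint_sdiff_right.mono_left inter_subset_right) (hBm.inter hVm) (hBm.diff hVm) hfin with h | h
  · left
    refine measure_mono_null ?_ h
    rintro x ⟨hx, hx2⟩
    refine ⟨hx, ?_⟩
    rw [hV, mem_preimage]
    rw [← (show ut x = vt x from hx2)]
    exact hsub (hu x hx)
  · right
    have h' : ∀ᵐ x, x ∉ B \ V := measure_eq_zero_iff_ae_notMem.1 h
    apply measure_eq_zero_iff_ae_notMem.2
    filter_upwards [h', heq] with x hx1 hx2 hx3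
    by_cases hxV : x ∈ V
    · exact hx3.2 (hx2 ⟨hx3.1, hxV⟩)
    · exact hx1 ⟨hx3.1, hxV⟩

/-- **Any Sobolev lifting differs a.e. from a bad continuous lifting, for general
coverings.** For `sp ≥ 1`, let `π : Ñ → N` be a covering map between metric spaces which is
nonexpansive and a local isometry. Let `Ω ⊆ ℝ^m` be a connected open set and `ũ : Ω → Ñ` a
continuous map in `W^{s,p}_loc(Ω,Ñ)` with infinite Gagliardo double integral on `Ω`. If `ṽ`
is Borel measurable with finite Gagliardo double integral on `Ω` and `π ∘ ṽ = π ∘ ũ` a.e.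
on `Ω`, then `ũ ≠ ṽ` a.e. on `Ω`. -/
theorem sobolev_lifting_differs_ae (s p : ℝ) (m : ℕ) (hs0 : 0 < s)
    (hs1 : s < 1) (hp1 : 1 ≤ p) (hsp : 1 ≤ s * p) (hm : 1 ≤ m)
    {Ntl N : Type*} [MetricSpace Ntl] [MetricSpace N]
    [MeasurableSpace Ntl] [BorelSpace Ntl]
    (π : Ntl → N) (hcov : IsCoveringMap π)
    (hnonexp : ∀ a b : Ntl, dist (π a) (π b) ≤ dist a b)
    (hlociso : ∀ a : Ntl, ∃ ε > 0, ∀ x ∈ ball a ε, ∀ y ∈ ball a ε,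
      dist (π x) (π y) = dist x y)
    (Ω : Set (EuclideanSpace ℝ (Fin m))) (hΩo : IsOpen Ω) (hΩc : IsConnected Ω)
    (ut vt : EuclideanSpace ℝ (Fin m) → Ntl)
    (hutc : ContinuousOn ut Ω) (hutloc : MemWsplocOn s p Ω ut)
    (hutinf : gagliardoIntegral s p Ω ut = ∞)
    (hvtm : Measurable vt) (hvtfin : gagliardoIntegral s p Ω vt < ∞)
    (hπ : ∀ᵐ x ∂(volume.restrict Ω), π (vt x) = π (ut x)) :
    ∀ᵐ x ∂(volume.restrict Ω), ut x ≠ vt x := by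
  rw [ae_restrict_iff' hΩo.measurableSet] at hπ
  have hloc := aux_local s p m hp1 hsp π hlociso Ω hΩo ut vt hutc hvtm hvtfin hπ
  set U : Set (EuclideanSpace ℝ (Fin m)) → Set (EuclideanSpace ℝ (Fin m)) :=
    fun C => {x | ∃ W, IsOpen W ∧ x ∈ W ∧ volume (W ∩ C) = 0} with hU
  have hUo : ∀ C, IsOpen (U C) := by
    intro C
    rw [isOpen_iff_mem_nhds]
    rintro x ⟨W, hW, hxW, hW0⟩
    exact Filter.mem_of_superset (hW.mem_nhds hxW) fun y hy => ⟨W, hW, hy, hW0⟩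
  have hUnull : ∀ C, Ω ⊆ U C → volume (Ω ∩ C) = 0 := by
    intro C hC
    apply measure_null_of_locally_null
    rintro x ⟨hx, hxC⟩
    obtain ⟨W, hW, hxW, hW0⟩ := hC hx
    refine ⟨W ∩ C, ?_, hW0⟩
    refine Filter.mem_of_superset (inter_mem_nhdsWithin _ (hW.mem_nhds hxW)) ?_
    rintro y ⟨⟨_, h1⟩, h2⟩
    exact ⟨h2, h1⟩
  have hcover : Ω ⊆ U {x | ut x = vt x} ∪ U {x | ut x ≠ vt x} := by
    intro x hx
    obtain ⟨r, hr, -, h | h⟩ := hloc x hx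
    · exact Or.inl ⟨_, isOpen_ball, mem_ball_self hr, h⟩
    · exact Or.inr ⟨_, isOpen_ball, mem_ball_self hr, h⟩
  have hdisj : Ω ∩ (U {x | ut x = vt x} ∩ U {x | ut x ≠ vt x}) = ∅ := by
    rw [eq_empty_iff_forall_notMem]
    rintro x ⟨-, ⟨W1, h1, hx1, hn1⟩, ⟨W2, h2, hx2, hn2⟩⟩
    have hpos := (h1.inter h2).measure_pos volume ⟨x, hx1, hx2⟩
    refine hpos.ne' (measure_mono_null ?_ (measure_union_null hn1 hn2))
    rintro y ⟨hy1, hy2⟩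
    by_cases h : ut y = vt y
    · exact Or.inl ⟨hy1, h⟩
    · exact Or.inr ⟨hy2, h⟩
  rw [ae_restrict_iff' hΩo.measurableSet]
  rcases isPreconnected_iff_subset_of_disjoint.1 hΩc.isPreconnected _ _ (hUo _) (hUo _) hcover hdisj
    with h | h
  · have := measure_eq_zero_iff_ae_notMem.1 (hUnull _ h)
    filter_upwards [this] with x hx hxΩ hne
    exact hx ⟨hxΩ, hne⟩
  · exfalso
    have := measure_eq_zero_iff_ae_notMem.1 (hUnull _ h)
    have hae : ∀ᵐ x ∂(volume.restrict Ω), ut x = vt x := by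
      rw [ae_restrict_iff' hΩo.measurableSet]
      filter_upwards [this] with x hx hxΩ
      by_contra hne
      exact hx ⟨hxΩ, hne⟩
    have hg : gagliardoIntegral s p Ω ut = gagliardoIntegral s p Ω vt := by
      unfold gagliardoIntegral
      refine lintegral_congr_ae ?_
      filter_upwards [hae] with x hx
      refine lintegral_congr_ae ?_
      filter_upwards [hae] with y hy
      rw [hx, hy]
    rw [← hg, hutinf] at hvtfin
    exact lt_irrefl _ hvtfin
end

section
/- Let m ≥ 2, 0<s<1 and p = 1/s. Let (Ñ, d_Ñ) and (N, d_N) be metric spaces and let π : Ñ → N be nonexpansive and an isometry at scale ρ>0 (d_N(π(a),π(b)) ≤ d_Ñ(a,b) for all a,b, with equality whenever d_Ñ(a,b) ≤ ρ). Let b̃, b̃' ∈ Ñ satisfy b̃ ≠ b̃' and π(b̃) = π(b̃'), and assume there is a Lipschitz path γ : ℝ → Ñ with γ(t) = b̃ for t ≤ 0 and γ(t) = b̃' for t ≥ 1. Then for every r > 0, x₀ ∈ ℝ^m, ε > 0 and M > 0 there exists a continuous map ũ : ℝ^m → Ñ such that: (i) ũ(x) = b̃ whenever |x - x₀| ≥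 r; (ii) ũ = b̃' on a neighborhood of x₀; (iii) ∫_{B_r(x₀)}∫_{B_r(x₀)} d_Ñ(ũ(x),ũ(y))^p/|x-y|^{m+1} dx dy > M; (iv) ∫_{ℝ^m}∫_{ℝ^m} d_N(π(ũ(x)),π(ũ(y)))^p/|x-y|^{m+1} dx dy < ε. -/
open MeasureTheory Set ENNReal Metric


lemma aux_radial_integrable (m : ℕ) (hm : 2 ≤ m) (p : ℝ) (hp : 1 < p) :
    Integrable (fun h : EuclideanSpace ℝ (Fin m) => (min 1 ‖h‖) ^ p * (‖h‖ ^ (m + 1))⁻¹) := by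
  have : Nontrivial (EuclideanSpace ℝ (Fin m)) := by
    apply Module.nontrivial_of_finrank_pos (R := ℝ)
    simp; omega
  rw [integrable_fun_norm_addHaar volume (f := fun t : ℝ => (min 1 t) ^ p * (t ^ (m + 1))⁻¹)]
  simp only [finrank_euclideanSpace, Fintype.card_fin, smul_eq_mul]
  have key : ∀ t : ℝ, 0 < t → t ^ (m - 1) * ((min 1 t) ^ p * (t ^ (m + 1))⁻¹)
      = (min 1 t) ^ p * t ^ (-2 : ℝ) := by
    intro t ht
    have h2 : t ^ (-2 : ℝ) = (t ^ 2)⁻¹ := by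
      rw [Real.rpow_neg ht.le]; norm_cast
    have h3 : t ^ (m + 1) = t ^ (m - 1) * t ^ 2 := by
      rw [← pow_add]; congr 1; omega
    rw [h2, h3]
    field_simp
  rw [← Ioc_union_Ioi_eq_Ioi (zero_le_one' ℝ)]
  refine IntegrableOn.union ?_ ?_
  · have h1 : IntegrableOn (fun x : ℝ ↦ x ^ (p - 2)) (Ioc (0 : ℝ) 1) := by
      rw [integrableOn_Ioc_iff_integrableOn_Ioo]
      rw [intervalIntegral.integrableOn_Ioo_rpow_iff one_pos]; linarith
    refine h1.congr_fun ?_ measurableSet_Ioc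
    intro t ht
    simp only
    rw [key t ht.1, min_eq_right ht.2, ← Real.rpow_add ht.1]; congr 1
  · have h1 := integrableOn_Ioi_rpow_of_lt (a := -2) (by norm_num) one_pos
    refine h1.congr_fun ?_ measurableSet_Ioi
    intro t ht
    have ht : 1 < t := ht
    simp only
    rw [key t (by linarith), min_eq_left ht.le]; simp

lemma aux_scaled (m : ℕ) (hm : 2 ≤ m) (p : ℝ) (hp : 1 < p) :
    ∃ I : ℝ, 0 ≤ I ∧ ∀ δ : ℝ, 0 < δ →
      ∫⁻ h : EuclideanSpace ℝ (Fin m),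
        ENNReal.ofReal ((min 1 (‖h‖ / δ)) ^ p * (‖h‖ ^ (m + 1))⁻¹) = ENNReal.ofReal (I / δ) := by
  have hint := aux_radial_integrable m hm p hp
  refine ⟨∫ h : EuclideanSpace ℝ (Fin m), (min 1 ‖h‖) ^ p * (‖h‖ ^ (m + 1))⁻¹,
    integral_nonneg fun h => by positivity, fun δ hδ => ?_⟩
  set g : EuclideanSpace ℝ (Fin m) → ℝ := fun h => (min 1 ‖h‖) ^ p * (‖h‖ ^ (m + 1))⁻¹ with hg
  have e : (fun h : EuclideanSpace ℝ (Fin m) => (min 1 (‖h‖ / δ)) ^ p * (‖h‖ ^ (m + 1))⁻¹)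
      = fun h => (δ ^ (m + 1))⁻¹ * g (δ⁻¹ • h) := by
    funext h
    simp only [hg, norm_smul, norm_inv, Real.norm_eq_abs, abs_of_pos hδ]
    rw [mul_pow, inv_pow, mul_inv, inv_inv, div_eq_inv_mul]
    field_simp
  have hint2 : Integrable (fun h => (δ ^ (m + 1))⁻¹ * g (δ⁻¹ • h)) :=
    (hint.comp_smul (inv_ne_zero hδ.ne')).const_mul _
  have hnn : ∀ h : EuclideanSpace ℝ (Fin m),
      0 ≤ (min 1 (‖h‖ / δ)) ^ p * (‖h‖ ^ (m + 1))⁻¹ := fun h => by positivity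
  rw [← ofReal_integral_eq_lintegral_ofReal (by rw [e]; exact hint2) (ae_of_all _ hnn), e,
    integral_const_mul, Measure.integral_comp_inv_smul_of_nonneg _ _ hδ.le]
  congr 1
  simp only [finrank_euclideanSpace, Fintype.card_fin, smul_eq_mul]
  field_simp
  ring

lemma aux_radial_infinite (m : ℕ) (hm : 2 ≤ m) (R : ℝ) (hR : 0 < R) :
    ∫⁻ h in ball (0 : EuclideanSpace ℝ (Fin m)) R, ENNReal.ofReal ((‖h‖ ^ m)⁻¹) = ∞ := by
  have : Nontrivial (EuclideanSpace ℝ (Fin m)) := by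
    apply Module.nontrivial_of_finrank_pos (R := ℝ)
    simp; omega
  by_contra hne
  have hmeas : Measurable fun h : EuclideanSpace ℝ (Fin m) => (‖h‖ ^ m)⁻¹ := by fun_prop
  have hint : IntegrableOn (fun h : EuclideanSpace ℝ (Fin m) => (‖h‖ ^ m)⁻¹) (ball 0 R) := by
    refine ⟨hmeas.aestronglyMeasurable, ?_⟩
    rw [hasFiniteIntegral_iff_ofReal (ae_of_all _ fun h => by positivity)]
    exact lt_top_iff_ne_top.2 hne
  rw [integrableOn_fun_norm_addHaar volume (f := fun t : ℝ => (t ^ m)⁻¹)] at hint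
  simp only [finrank_euclideanSpace, Fintype.card_fin, smul_eq_mul] at hint
  have h2 : IntegrableOn (fun t : ℝ => t ^ (-1 : ℝ)) (Ioo 0 R) := by
    refine hint.congr_fun ?_ measurableSet_Ioo
    intro t ht
    have ht0 := ht.1
    simp only
    rw [Real.rpow_neg_one]
    have h3 : t ^ m = t ^ (m - 1) * t := by
      rw [← pow_succ]; congr 1; omega
    rw [h3]; field_simp
  rw [intervalIntegral.integrableOn_Ioo_rpow_iff hR] at h2
  linarith

/-- measure of the part of the ball which is moved out by a translation -/
lemma aux_translate (m : ℕ) (x₀ : EuclideanSpace ℝ (Fin m)) (R : ℝ) (hR : 0 < R)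
    (h : EuclideanSpace ℝ (Fin m)) (h0 : h ≠ 0) (hh : ‖h‖ ≤ R) :
    volume (closedBall x₀ R) * ENNReal.ofReal (‖h‖ / (3 * R)) ≤
      volume {x | x ∈ closedBall x₀ R ∧ x + h ∉ closedBall x₀ R} := by
  set A := closedBall x₀ R
  have hn : 0 < ‖h‖ := norm_pos_iff.2 h0
  have ind : ∀ n : ℕ, volume {x | x ∈ A ∧ x + (n : ℝ) • h ∉ A} ≤
      n * volume {x | x ∈ A ∧ x + h ∉ A} := by
    intro n
    induction n with
    | zero => simp
    | succ n ih =>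
      have hsub : {x | x ∈ A ∧ x + ((n + 1 : ℕ) : ℝ) • h ∉ A} ⊆
          {x | x ∈ A ∧ x + (n : ℝ) • h ∉ A} ∪
          (fun x => x + (n : ℝ) • h) ⁻¹' {x | x ∈ A ∧ x + h ∉ A} := by
        rintro x ⟨hx1, hx2⟩
        by_cases hx : x + (n : ℝ) • h ∈ A
        · right
          refine ⟨hx, ?_⟩
          convert hx2 using 1
          push_cast
          rw [add_smul, one_smul, add_assoc]
        · left; exact ⟨hx1, hx⟩
      refine (measure_mono hsub).trans ((measure_union_le _ _).trans ?_)
      rw [measure_preimage_add_right]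
      push_cast
      rw [add_mul, one_mul]
      gcongr
  set n := ⌊2 * R / ‖h‖⌋₊ + 1 with hndef
  have hn1 : 2 * R / ‖h‖ < n := by rw [hndef]; push_cast; exact Nat.lt_floor_add_one _
  have hn2 : (n : ℝ) ≤ 3 * R / ‖h‖ := by
    have := Nat.floor_le (show 0 ≤ 2 * R / ‖h‖ by positivity)
    have h1 : 1 ≤ R / ‖h‖ := by rwa [one_le_div hn]
    rw [hndef]; push_cast
    have : 3 * R / ‖h‖ = 2 * R / ‖h‖ + R / ‖h‖ := by ring
    linarith
  have hA : A ⊆ {x | x ∈ A ∧ x + (n : ℝ) • h ∉ A} := by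
    intro x hx
    refine ⟨hx, fun hx2 => ?_⟩
    have h1 : dist x (x + (n : ℝ) • h) ≤ R + R :=
      (dist_triangle_right _ _ x₀).trans (add_le_add hx hx2)
    rw [dist_self_add_right, norm_smul, Real.norm_natCast] at h1
    rw [div_lt_iff₀ hn] at hn1
    linarith
  have h1 := (measure_mono hA).trans (ind n)
  have h2 : volume A ≤ ENNReal.ofReal (3 * R / ‖h‖) * volume {x | x ∈ A ∧ x + h ∉ A} := by
    refine h1.trans ?_
    gcongr
    rw [← ENNReal.ofReal_natCast]
    exact ENNReal.ofReal_le_ofReal hn2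
  calc _ ≤ (ENNReal.ofReal (3 * R / ‖h‖) * volume {x | x ∈ A ∧ x + h ∉ A})
        * ENNReal.ofReal (‖h‖ / (3 * R)) := by gcongr
    _ = (ENNReal.ofReal (3 * R / ‖h‖) * ENNReal.ofReal (‖h‖ / (3 * R))) *
        volume {x | x ∈ A ∧ x + h ∉ A} := by ring
    _ = _ := by
      rw [← ENNReal.ofReal_mul (by positivity)]
      have : 3 * R / ‖h‖ * (‖h‖ / (3 * R)) = 1 := by field_simp
      rw [this]; simp

lemma aux_infinite (m : ℕ) (hm : 2 ≤ m) (x₀ : EuclideanSpace ℝ (Fin m)) (R r : ℝ) (hR : 0 < R)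
    (hRr : R < r) :
    ∫⁻ x in closedBall x₀ R, ∫⁻ y in ball x₀ r \ closedBall x₀ R,
      (edist x y ^ ((m : ℝ) + 1))⁻¹ = ∞ := by
  set A := closedBall x₀ R with hA
  set C := ball x₀ r \ A with hC
  have mA : MeasurableSet A := measurableSet_closedBall
  have mC : MeasurableSet C := measurableSet_ball.diff mA
  set q := min R (r - R) with hq
  have hq0 : 0 < q := lt_min hR (by linarith)
  set G : EuclideanSpace ℝ (Fin m) → EuclideanSpace ℝ (Fin m) → ℝ≥0∞ := fun x h =>
    A.indicator 1 x * C.indicator 1 (x + h) * (‖h‖ₑ ^ ((m : ℝ) + 1))⁻¹ with hG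
  have hGm : Measurable (Function.uncurry G) := by
    have i1 : Measurable (A.indicator (1 : EuclideanSpace ℝ (Fin m) → ℝ≥0∞)) :=
      measurable_one.indicator mA
    have i2 : Measurable (C.indicator (1 : EuclideanSpace ℝ (Fin m) → ℝ≥0∞)) :=
      measurable_one.indicator mC
    simp only [hG, Function.uncurry_def]
    refine ((i1.comp measurable_fst).mul (i2.comp (measurable_fst.add measurable_snd))).mul ?_
    exact ((measurable_snd.enorm).pow_const _).inv
  have e1 : ∫⁻ x in A, ∫⁻ y in C, (edist x y ^ ((m : ℝ) + 1))⁻¹ = ∫⁻ x, ∫⁻ h, G x h := by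
    rw [← lintegral_indicator mA]
    congr 1; funext x
    by_cases hx : x ∈ A
    · rw [indicator_of_mem hx, ← lintegral_indicator mC,
        ← lintegral_add_left_eq_self _ x]
      congr 1; funext h
      simp only [hG, indicator_of_mem hx, Pi.one_apply, one_mul]
      by_cases hh : x + h ∈ C
      · rw [indicator_of_mem hh, indicator_of_mem hh, edist_comm, edist_eq_enorm_sub]
        simp
      · rw [indicator_of_notMem hh, indicator_of_notMem hh]; simp
    · rw [indicator_of_notMem hx]
      simp [hG, indicator_of_notMem hx]
  rw [e1, lintegral_lintegral_swap hGm.aemeasurable]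
  rw [eq_top_iff]
  set c := volume A * ENNReal.ofReal (1 / (3 * R)) with hc
  have hc0 : c ≠ 0 := by
    refine mul_ne_zero (measure_closedBall_pos volume x₀ hR).ne' ?_
    simp; positivity
  have key : ∀ h ∈ ball (0 : EuclideanSpace ℝ (Fin m)) q,
      c * ENNReal.ofReal ((‖h‖ ^ m)⁻¹) ≤ ∫⁻ x, G x h := by
    intro h hh
    rw [mem_ball_zero_iff] at hh
    have hhR : ‖h‖ < R := hh.trans_le (min_le_left _ _)
    have hhr : ‖h‖ < r - R := hh.trans_le (min_le_right _ _)
    by_cases h0 : h = 0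
    · have hm0 : m ≠ 0 := by omega
      subst h0
      rw [norm_zero, zero_pow hm0, _root_.inv_zero, ENNReal.ofReal_zero, mul_zero]
      exact bot_le
    have hn : 0 < ‖h‖ := norm_pos_iff.2 h0
    have mS : MeasurableSet {x | x ∈ A ∧ x + h ∉ A} :=
      mA.inter ((measurable_add_const h) mA).compl
    have e2 : ∫⁻ x, G x h = volume {x | x ∈ A ∧ x + h ∉ A} * (‖h‖ₑ ^ ((m : ℝ) + 1))⁻¹ := by
      rw [← lintegral_indicator_one mS, ← lintegral_mul_const _ (measurable_one.indicator mS)]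
      congr 1; funext x
      simp only [hG]
      congr 1
      by_cases hx : x ∈ A
      · have hb : x + h ∈ ball x₀ r := by
          rw [mem_ball]
          have : dist (x + h) x₀ ≤ dist (x + h) x + dist x x₀ := dist_triangle _ _ _
          rw [dist_self_add_left] at this
          have := mem_closedBall.1 hx
          linarith
        by_cases hx2 : x + h ∈ A
        · simp [hC, indicator, hx, hx2]
        · simp [hC, indicator, hx, hx2, hb]
      · simp [indicator, hx]
    rw [e2]
    refine le_trans (le_of_eq ?_) (mul_le_mul_left (aux_translate m x₀ R hR h h0 hhR.le) _)
    rw [hc, ← ofReal_norm, ENNReal.ofReal_rpow_of_pos hn,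
      ← ENNReal.ofReal_inv_of_pos (by positivity), mul_assoc, mul_assoc,
      ← ENNReal.ofReal_mul (by positivity), ← ENNReal.ofReal_mul (by positivity)]
    congr 2
    have : ‖h‖ ^ ((m : ℝ) + 1) = ‖h‖ ^ m * ‖h‖ := by
      rw [← pow_succ]; norm_cast
    rw [this]; field_simp
  calc ∞ = c * ∫⁻ h in ball (0 : EuclideanSpace ℝ (Fin m)) q, ENNReal.ofReal ((‖h‖ ^ m)⁻¹) := by
        rw [aux_radial_infinite m hm q hq0, ENNReal.mul_top hc0]
    _ = ∫⁻ h in ball (0 : EuclideanSpace ℝ (Fin m)) q, c * ENNReal.ofReal ((‖h‖ ^ m)⁻¹) := by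
        rw [lintegral_const_mul]; fun_prop
    _ ≤ ∫⁻ h in ball (0 : EuclideanSpace ℝ (Fin m)) q, ∫⁻ x, G x h :=
        setLIntegral_mono' measurableSet_ball key
    _ ≤ _ := setLIntegral_le_lintegral _ _

lemma aux_lower (m : ℕ) (hm : 2 ≤ m) (x₀ : EuclideanSpace ℝ (Fin m)) (R r : ℝ) (hR : 0 < R)
    (hRr : R < r) (δ₀ : ℝ) (hδ₀ : 0 < δ₀) (M : ℝ≥0∞) (hM : M ≠ ∞) :
    ∃ δ : ℝ, 0 < δ ∧ δ ≤ δ₀ ∧ M < ∫⁻ x in closedBall x₀ R, ∫⁻ y in ball x₀ r \ ball x₀ (R + δ),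
      (edist x y ^ ((m : ℝ) + 1))⁻¹ := by
  have hk : Measurable fun z : EuclideanSpace ℝ (Fin m) × EuclideanSpace ℝ (Fin m) =>
      (edist z.1 z.2 ^ ((m : ℝ) + 1))⁻¹ := (measurable_edist.pow_const _).inv
  have conv : ∀ S : Set (EuclideanSpace ℝ (Fin m)),
      ∫⁻ x in closedBall x₀ R, ∫⁻ y in S, (edist x y ^ ((m : ℝ) + 1))⁻¹ =
      ∫⁻ z in closedBall x₀ R ×ˢ S, (edist z.1 z.2 ^ ((m : ℝ) + 1))⁻¹ ∂(volume.prod volume) := by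
    intro S
    rw [← Measure.prod_restrict, lintegral_prod _ hk.aemeasurable]
  set d : ℕ → ℝ := fun n => δ₀ / ((n : ℝ) + 1) with hd
  have hU : ball x₀ r \ closedBall x₀ R = ⋃ n, (ball x₀ r \ ball x₀ (R + d n)) := by
    ext y
    simp only [mem_sdiff, mem_ball, mem_closedBall, mem_iUnion, not_le, not_lt]
    constructor
    · rintro ⟨h1, h2⟩
      obtain ⟨n, hn⟩ := exists_nat_gt (δ₀ / (dist y x₀ - R))
      refine ⟨n, h1, ?_⟩
      have h3 : 0 < dist y x₀ - R := by linarith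
      rw [div_lt_iff₀ h3] at hn
      have : d n ≤ dist y x₀ - R := by
        simp only [hd]
        rw [div_le_iff₀ (by positivity)]
        nlinarith
      linarith
    · rintro ⟨n, h1, h2⟩
      have : 0 < d n := by simp only [hd]; positivity
      exact ⟨h1, by linarith⟩
  have hinf := aux_infinite m hm x₀ R r hR hRr
  rw [conv, hU, prod_iUnion, setLIntegral_iUnion_of_directed] at hinf
  · have : M < ⨆ n, ∫⁻ z in closedBall x₀ R ×ˢ (ball x₀ r \ ball x₀ (R + d n)),
        (edist z.1 z.2 ^ ((m : ℝ) + 1))⁻¹ ∂(volume.prod volume) := by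
      rw [hinf]; exact lt_top_iff_ne_top.2 hM
    obtain ⟨n, hn⟩ := lt_iSup_iff.1 this
    refine ⟨d n, by simp only [hd]; positivity, ?_, ?_⟩
    · simp only [hd]
      apply div_le_self hδ₀.le; linarith [n.cast_nonneg (α := ℝ)]
    · rw [conv]; exact hn
  · apply Monotone.directed_le
    intro a b hab
    apply prod_mono_right
    apply sdiff_subset_sdiff_right
    apply ball_subset_ball
    simp only [hd]
    gcongr

lemma aux_layer (m : ℕ) (x₀ : EuclideanSpace ℝ (Fin m)) (R δ : ℝ) (hR : 0 < R)
    (hδ : 0 < δ) (hδR : δ ≤ R) :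
    volume (closedBall x₀ (R + δ) \ closedBall x₀ R) ≤
      ENNReal.ofReal (volume.real (ball (0 : EuclideanSpace ℝ (Fin m)) 1) *
        (δ * m * (2 * R) ^ (m - 1))) := by
  have hsub : closedBall x₀ R ⊆ closedBall x₀ (R + δ) := closedBall_subset_closedBall (by linarith)
  rw [measure_sdiff hsub measurableSet_closedBall.nullMeasurableSet measure_closedBall_lt_top.ne,
    Measure.addHaar_closedBall _ _ (by linarith), Measure.addHaar_closedBall _ _ hR.le]
  simp only [finrank_euclideanSpace, Fintype.card_fin]
  have hw : volume (ball (0 : EuclideanSpace ℝ (Fin m)) 1) =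
      ENNReal.ofReal (volume.real (ball (0 : EuclideanSpace ℝ (Fin m)) 1)) := by
    rw [Measure.real, ENNReal.ofReal_toReal measure_ball_lt_top.ne]
  have hw0 : 0 ≤ volume.real (ball (0 : EuclideanSpace ℝ (Fin m)) 1) := measureReal_nonneg
  rw [hw, ← ENNReal.ofReal_mul (by positivity), ← ENNReal.ofReal_mul (by positivity),
    ← ENNReal.ofReal_sub _ (by positivity)]
  apply ENNReal.ofReal_le_ofReal
  rw [← sub_mul, mul_comm]
  refine mul_le_mul_of_nonneg_left ?_ hw0
  have h1 := (le_abs_self _).trans (abs_pow_sub_pow_le (R + δ) R m)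
  refine h1.trans ?_
  rw [add_sub_cancel_left, abs_of_pos hδ, abs_of_pos (by linarith : 0 < R + δ), abs_of_pos hR,
    max_eq_left (by linarith)]
  gcongr
  linarith

lemma aux_upper {N : Type*} [MetricSpace N] (m : ℕ) (p : ℝ) (hp : 1 < p) (I : ℝ) (δ : ℝ)
    (hδ : 0 < δ)
    (hI : ∫⁻ h : EuclideanSpace ℝ (Fin m),
        ENNReal.ofReal ((min 1 (‖h‖ / δ)) ^ p * (‖h‖ ^ (m + 1))⁻¹) = ENNReal.ofReal (I / δ))
    (v : EuclideanSpace ℝ (Fin m) → N) (K : ℝ) (hK : 0 ≤ K)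
    (L : Set (EuclideanSpace ℝ (Fin m))) (mL : MeasurableSet L)
    (hv : ∀ x y, dist (v x) (v y) ≤ K * min 1 (‖y - x‖ / δ))
    (hc : ∀ x y, x ∉ L → y ∉ L → v x = v y) :
    (∫⁻ x, ∫⁻ y, edist (v x) (v y) ^ p / edist x y ^ ((m : ℝ) + 1)) ≤
      2 * (volume L * (ENNReal.ofReal (K ^ p) * ENNReal.ofReal (I / δ))) := by
  set g : EuclideanSpace ℝ (Fin m) → ℝ≥0∞ := fun h =>
    ENNReal.ofReal (K ^ p) * ENNReal.ofReal ((min 1 (‖h‖ / δ)) ^ p * (‖h‖ ^ (m + 1))⁻¹) with hg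
  have mg : Measurable g := by
    simp only [hg]; fun_prop
  have Ig : ∫⁻ h, g h = ENNReal.ofReal (K ^ p) * ENNReal.ofReal (I / δ) := by
    rw [← hI, ← lintegral_const_mul]; fun_prop
  have pt : ∀ x y, edist (v x) (v y) ^ p / edist x y ^ ((m : ℝ) + 1) ≤ g (y - x) := by
    intro x y
    by_cases hxy : x = y
    · subst hxy
      rw [edist_self, ENNReal.zero_rpow_of_pos (by linarith), ENNReal.zero_div]
      exact bot_le
    have hn : 0 < ‖y - x‖ := norm_pos_iff.2 (sub_ne_zero.2 (Ne.symm hxy))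
    rw [edist_comm x y, edist_dist y x, edist_dist, dist_eq_norm y x,
      ENNReal.ofReal_rpow_of_pos hn, ENNReal.ofReal_rpow_of_nonneg dist_nonneg (by linarith),
      ← ENNReal.ofReal_div_of_pos (by positivity)]
    simp only [hg]
    rw [← ENNReal.ofReal_mul (by positivity)]
    apply ENNReal.ofReal_le_ofReal
    have e1 : ‖y - x‖ ^ ((m : ℝ) + 1) = ‖y - x‖ ^ (m + 1) := by norm_cast
    rw [e1, div_eq_mul_inv, ← mul_assoc, ← Real.mul_rpow hK (by positivity)]
    have := hv x y
    gcongr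
  set F : EuclideanSpace ℝ (Fin m) → ℝ≥0∞ := L.indicator 1 with hF
  have mF : Measurable F := measurable_one.indicator mL
  have IF : ∫⁻ x, F x = volume L := lintegral_indicator_one mL
  have mg2 : Measurable fun z : EuclideanSpace ℝ (Fin m) × EuclideanSpace ℝ (Fin m) =>
      g (z.2 - z.1) := mg.comp (measurable_snd.sub measurable_fst)
  have m1 : Measurable fun z : EuclideanSpace ℝ (Fin m) × EuclideanSpace ℝ (Fin m) =>
      F z.1 * g (z.2 - z.1) := (mF.comp measurable_fst).mul mg2
  have m2 : Measurable fun z : EuclideanSpace ℝ (Fin m) × EuclideanSpace ℝ (Fin m) =>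
      F z.2 * g (z.2 - z.1) := (mF.comp measurable_snd).mul mg2
  calc _ ≤ ∫⁻ x, ∫⁻ y, (F x * g (y - x) + F y * g (y - x)) := by
        refine lintegral_mono fun x => lintegral_mono fun y => ?_
        by_cases hx : x ∈ L
        · refine (pt x y).trans ?_
          simp only [hF, indicator_of_mem hx, Pi.one_apply, one_mul]
          exact le_self_add
        by_cases hy : y ∈ L
        · refine (pt x y).trans ?_
          simp only [hF, indicator_of_mem hy, Pi.one_apply, one_mul]
          exact le_add_self
        · simp only [hc x y hx hy]
          rw [edist_self, ENNReal.zero_rpow_of_pos (by linarith), ENNReal.zero_div]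
          exact bot_le
    _ = (∫⁻ x, ∫⁻ y, F x * g (y - x)) + ∫⁻ x, ∫⁻ y, F y * g (y - x) := by
        rw [← lintegral_add_left]
        · congr 1; funext x
          rw [lintegral_add_left]
          exact m1.comp (measurable_prodMk_left)
        · exact m1.lintegral_prod_right'
    _ = volume L * (∫⁻ h, g h) + volume L * (∫⁻ h, g h) := by
        congr 1
        · rw [← IF, ← lintegral_mul_const _ mF]
          congr 1; funext x
          rw [lintegral_const_mul (F x) (show Measurable fun y => g (y - x) from mg.comp (measurable_id.sub_const x)),
            lintegral_sub_right_eq_self]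
        · rw [lintegral_lintegral_swap m2.aemeasurable, ← IF, ← lintegral_mul_const _ mF]
          congr 1; funext y
          rw [lintegral_const_mul (F y) (show Measurable fun x => g (y - x) from mg.comp (measurable_id.const_sub y)),
            lintegral_sub_left_eq_self]
    _ = _ := by rw [Ig, two_mul]

/-- **The basic ingredient for the analytical obstruction.** Let `m ≥ 2`, `0 < s < 1`,
`p = 1/s`. Let `π : Ñ → N` between metric spaces be nonexpansive and an isometry at scale
`ρ > 0`, and let `b̃ ≠ b̃'` with `π(b̃) = π(b̃')` be joined by a Lipschitz path constantly
`b̃` near `-∞` and `b̃'` near `+∞`. Then for all `r > 0`, `x₀`, `ε > 0`, `M > 0` there is a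
continuous `ũ : ℝ^m → Ñ`, equal to `b̃` outside `B_r(x₀)` and to `b̃'` near `x₀`, whose
`W^{s,p}` seminorm on `B_r(x₀)` exceeds `M` while the seminorm of `π ∘ ũ` on `ℝ^m` is less
than `ε`. -/
theorem analytical_singularity_basic_ingredient (s p : ℝ) (m : ℕ) (hm : 2 ≤ m)
    (hs0 : 0 < s) (hs1 : s < 1) (hp : p = 1 / s)
    {Ntl N : Type*} [MetricSpace Ntl] [MetricSpace N]
    (π : Ntl → N) (ρ : ℝ) (hρ : 0 < ρ)
    (hnonexp : ∀ a b : Ntl, dist (π a) (π b) ≤ dist a b)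
    (hiso : ∀ a b : Ntl, dist a b ≤ ρ → dist (π a) (π b) = dist a b)
    (bt bt' : Ntl) (hbne : bt ≠ bt') (hbπ : π bt = π bt')
    (γ : ℝ → Ntl) (K : NNReal) (hγ : LipschitzWith K γ)
    (hγ0 : ∀ t : ℝ, t ≤ 0 → γ t = bt) (hγ1 : ∀ t : ℝ, 1 ≤ t → γ t = bt')
    (r : ℝ) (hr : 0 < r) (x₀ : EuclideanSpace ℝ (Fin m)) (ε : ℝ) (hε : 0 < ε)
    (M : ℝ) (hM : 0 < M) :
    ∃ ut : EuclideanSpace ℝ (Fin m) → Ntl, Continuous ut ∧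
      (∀ x, r ≤ dist x x₀ → ut x = bt) ∧
      (∃ U : Set (EuclideanSpace ℝ (Fin m)), IsOpen U ∧ x₀ ∈ U ∧ ∀ x ∈ U, ut x = bt') ∧
      ENNReal.ofReal M <
        (∫⁻ x in ball x₀ r, ∫⁻ y in ball x₀ r,
          edist (ut x) (ut y) ^ p / edist x y ^ ((m : ℝ) + 1)) ∧
      (∫⁻ x : EuclideanSpace ℝ (Fin m), ∫⁻ y : EuclideanSpace ℝ (Fin m),
          edist (π (ut x)) (π (ut y)) ^ p / edist x y ^ ((m : ℝ) + 1)) <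
        ENNReal.ofReal ε := by
  have hp1 : 1 < p := by rw [hp, lt_div_iff₀ hs0]; linarith
  obtain ⟨I, hI0, hI⟩ := aux_scaled m hm p hp1
  set w := volume.real (ball (0 : EuclideanSpace ℝ (Fin m)) 1) with hw
  have hw0 : 0 ≤ w := measureReal_nonneg
  have hK0 : (0 : ℝ) ≤ K := K.2
  set B : ℝ := 2 * (w * m * ((K : ℝ) ^ p * I)) with hB
  have hB0 : 0 ≤ B := by positivity
  obtain ⟨R, hR, hR1, hRr, hRε⟩ : ∃ R : ℝ, 0 < R ∧ 2 * R ≤ 1 ∧ 2 * R < r ∧ B * (2 * R) < ε := by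
    refine ⟨min (1 / 2) (min (r / 3) (ε / (4 * (B + 1)))), by positivity, ?_, ?_, ?_⟩
    · linarith [min_le_left (1 / 2 : ℝ) (min (r / 3) (ε / (4 * (B + 1))))]
    · linarith [(min_le_right (1 / 2 : ℝ) (min (r / 3) (ε / (4 * (B + 1))))).trans
        (min_le_left _ _)]
    · have h1 := (min_le_right (1 / 2 : ℝ) (min (r / 3) (ε / (4 * (B + 1))))).trans
        (min_le_right _ _)
      set R := min (1 / 2) (min (r / 3) (ε / (4 * (B + 1))))
      rw [le_div_iff₀ (by positivity)] at h1
      have hR0 : 0 ≤ R := by positivity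
      nlinarith
  have hD0 : edist bt bt' ^ p ≠ 0 := by
    have : edist bt bt' ≠ 0 := by simpa using hbne
    simp [ENNReal.rpow_eq_zero_iff, this]
  have hDt : edist bt bt' ^ p ≠ ∞ := ENNReal.rpow_ne_top_of_nonneg (by linarith) (edist_ne_top _ _)
  obtain ⟨δ, hδ, hδR, hδM⟩ := aux_lower m hm x₀ R r hR (by linarith) R hR
    (ENNReal.ofReal M / edist bt bt' ^ p) (ENNReal.div_ne_top ENNReal.ofReal_ne_top hD0)
  set φ : EuclideanSpace ℝ (Fin m) → ℝ := fun x => 1 + (R - dist x x₀) / δ with hφ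
  have hin : ∀ x, dist x x₀ ≤ R → γ (φ x) = bt' := fun x hx => hγ1 _ (by
    have : 0 ≤ (R - dist x x₀) / δ := div_nonneg (by linarith) hδ.le
    simp only [hφ]; linarith)
  have hout : ∀ x, R + δ ≤ dist x x₀ → γ (φ x) = bt := fun x hx => hγ0 _ (by
    have : (R - dist x x₀) / δ ≤ -1 := by rw [div_le_iff₀ hδ]; linarith
    simp only [hφ]; linarith)
  have hφc : Continuous φ := by simp only [hφ]; fun_prop
  refine ⟨fun x => γ (φ x), hγ.continuous.comp hφc, fun x hx => hout x (by linarith),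
    ⟨ball x₀ R, isOpen_ball, mem_ball_self hR, fun x hx => hin x (mem_ball.1 hx).le⟩, ?_, ?_⟩
  · rw [ENNReal.div_lt_iff (Or.inl hD0) (Or.inl hDt)] at hδM
    refine hδM.trans_le ?_
    rw [← lintegral_mul_const' _ _ hDt]
    refine le_trans ?_ (lintegral_mono_set (closedBall_subset_ball (by linarith : R < r)))
    refine setLIntegral_mono' measurableSet_closedBall fun x hx => ?_
    rw [← lintegral_mul_const' _ _ hDt]
    refine le_trans ?_ (lintegral_mono_set (sdiff_subset (t := ball x₀ (R + δ))))
    refine setLIntegral_mono' (measurableSet_ball.diff measurableSet_ball) fun y hy => ?_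
    have h2 : R + δ ≤ dist y x₀ := by
      have := hy.2
      rw [mem_ball, not_lt] at this; exact this
    simp only []
    rw [hin x hx, hout y h2, edist_comm bt' bt, ENNReal.div_eq_inv_mul]
  · have hγb : ∀ a b, dist (γ a) (γ b) ≤ K := by
      have hcl : ∀ t, γ t = γ (max 0 (min 1 t)) := by
        intro t
        rcases le_total t 0 with h | h
        · rw [hγ0 t h, hγ0]; simp [h]
        rcases le_total 1 t with h' | h'
        · rw [hγ1 t h', hγ1]; simp [h']
        · rw [min_eq_right h', max_eq_right h]
      intro a b
      rw [hcl a, hcl b]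
      refine (hγ.dist_le_mul _ _).trans ?_
      have : dist (max 0 (min 1 a)) (max 0 (min 1 b)) ≤ 1 := by
        have h1 : max 0 (min 1 a) ≤ 1 := by simp
        have h2 : max 0 (min 1 b) ≤ 1 := by simp
        have h3 : 0 ≤ max 0 (min 1 a) := le_max_left _ _
        have h4 : 0 ≤ max 0 (min 1 b) := le_max_left _ _
        rw [Real.dist_eq, abs_le]; constructor <;> linarith
      nlinarith
    have hv : ∀ x y, dist (π (γ (φ x))) (π (γ (φ y))) ≤ K * min 1 (‖y - x‖ / δ) := by
      intro x y
      refine (hnonexp _ _).trans ?_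
      rw [mul_min_of_nonneg _ _ hK0, mul_one]
      refine le_min (hγb _ _) ((hγ.dist_le_mul _ _).trans ?_)
      gcongr
      have : φ x - φ y = (dist y x₀ - dist x x₀) / δ := by simp only [hφ]; ring
      rw [Real.dist_eq, this, abs_div, abs_of_pos hδ, ← dist_eq_norm]
      gcongr
      exact abs_dist_sub_le _ _ _
    have hcon : ∀ x, x ∉ closedBall x₀ (R + δ) \ closedBall x₀ R → π (γ (φ x)) = π bt := by
      intro x hx
      by_cases h : dist x x₀ ≤ R
      · rw [hin x h, hbπ]
      · rw [hout x]
        by_contra h2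
        exact hx ⟨mem_closedBall.2 (not_le.1 h2).le, h⟩
    refine (aux_upper m p hp1 I δ hδ (hI δ hδ) (fun x => π (γ (φ x))) K hK0
      (closedBall x₀ (R + δ) \ closedBall x₀ R)
      (measurableSet_closedBall.diff measurableSet_closedBall) hv
      (fun x y hx hy => (hcon x hx).trans (hcon y hy).symm)).trans_lt ?_
    refine lt_of_le_of_lt (mul_le_mul_right (mul_le_mul_left
      (aux_layer m x₀ R δ hR hδ hδR) _) _) ?_
    rw [← hw, ← ENNReal.ofReal_mul (by positivity), ← ENNReal.ofReal_mul (by positivity),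
      ← ENNReal.ofReal_ofNat 2, ← ENNReal.ofReal_mul (by positivity)]
    rw [ENNReal.ofReal_lt_ofReal_iff hε]
    refine lt_of_le_of_lt ?_ hRε
    have hpow : (2 * R) ^ (m - 1) ≤ 2 * R := pow_le_of_le_one (by positivity) hR1 (by omega)
    have e : 2 * (w * (δ * m * (2 * R) ^ (m - 1)) * ((K : ℝ) ^ p * (I / δ)))
        = B * (2 * R) ^ (m - 1) := by
      rw [hB]; field_simp
    rw [e]
    gcongr
end

section
/- Let m ≥ 2, 0<s<1 and p = 1/s. There is a constant C depending only on m and p with the following property: for every metric space (X,d), every δ ∈ (0,1), and every map u : ℝ^m → X that is (L/δ)-Lipschitz for some L ≥ 0, constant on ℝ^m ∖ U_δ where U_δ := {x ∈ ℝ^m : (1-δ)/2 < |x| < 1/2}, and whose image has diameter at most K < ∞, one has ∫_{ℝ^m}∫_{ℝ^m} d(u(x),u(y))^p/|x-y|^{m+1} dx dy ≤ C (L^p + K^p). In particular the bound is independent of δ. -/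
open MeasureTheory Set ENNReal

noncomputable section

/-- radial profile near the diagonal -/
def nearProf (m : ℕ) (p : ℝ) (r : ℝ) : ℝ := (Iio (1 : ℝ)).indicator (fun r => r ^ (p - m - 1)) r

/-- radial profile away from the diagonal -/
def farProf (m : ℕ) (r : ℝ) : ℝ := (Ici (1 : ℝ)).indicator (fun r => r ^ (-(m : ℝ) - 1)) r

lemma nearProf_nonneg (m : ℕ) (p r : ℝ) (hr : 0 ≤ r) : 0 ≤ nearProf m p r := by
  unfold nearProf
  by_cases h : r ∈ Iio (1 : ℝ)
  · rw [indicator_of_mem h]; positivity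
  · rw [indicator_of_notMem h]

lemma farProf_nonneg (m : ℕ) (r : ℝ) (hr : 0 ≤ r) : 0 ≤ farProf m r := by
  unfold farProf
  by_cases h : r ∈ Ici (1 : ℝ)
  · rw [indicator_of_mem h]; positivity
  · rw [indicator_of_notMem h]

lemma measurable_nearProf (m : ℕ) (p : ℝ) : Measurable (nearProf m p) := by
  unfold nearProf
  exact (by fun_prop : Measurable fun r : ℝ => r ^ (p - m - 1)).indicator measurableSet_Iio

lemma measurable_farProf (m : ℕ) : Measurable (farProf m) := by
  unfold farProf
  exact (by fun_prop : Measurable fun r : ℝ => r ^ (-(m : ℝ) - 1)).indicator measurableSet_Ici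

lemma integrable_near (m : ℕ) (hm : 2 ≤ m) (p : ℝ) (hp : 1 < p) :
    Integrable (fun x : EuclideanSpace ℝ (Fin m) => nearProf m p ‖x‖) := by
  have : Nonempty (Fin m) := ⟨⟨0, by omega⟩⟩
  rw [integrable_fun_norm_addHaar volume, finrank_euclideanSpace_fin]
  have h1 : IntegrableOn (fun x : ℝ => x ^ (p - 2)) (Ioo 0 1) :=
    (intervalIntegral.integrableOn_Ioo_rpow_iff one_pos).2 (by linarith)
  have h2 : IntegrableOn ((Ioo (0 : ℝ) 1).indicator (fun x : ℝ => x ^ (p - 2))) (Ioi 0) :=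
    ((integrable_indicator_iff measurableSet_Ioo).2 h1).integrableOn
  refine h2.congr_fun ?_ measurableSet_Ioi
  intro x hx
  have hx' : 0 < x := hx
  by_cases h : x < 1
  · have e : ((m - 1 : ℕ) : ℝ) = (m : ℝ) - 1 := by
      rw [Nat.cast_sub (by omega)]; simp
    simp only [nearProf, indicator, mem_Ioo, mem_Iio, hx', h, and_self, if_true, smul_eq_mul]
    rw [← Real.rpow_natCast, ← Real.rpow_add hx', e]
    congr 1; ring
  · simp [nearProf, indicator, h]

lemma integrable_far (m : ℕ) (hm : 2 ≤ m) :
    Integrable (fun x : EuclideanSpace ℝ (Fin m) => farProf m ‖x‖) := by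
  have : Nonempty (Fin m) := ⟨⟨0, by omega⟩⟩
  rw [integrable_fun_norm_addHaar volume, finrank_euclideanSpace_fin]
  have h1 : IntegrableOn (fun x : ℝ => x ^ (-2 : ℝ)) (Ici 1) :=
    (integrableOn_Ici_iff_integrableOn_Ioi (by simp)).2 (integrableOn_Ioi_rpow_of_lt (by norm_num) one_pos)
  have h2 : IntegrableOn ((Ici (1 : ℝ)).indicator (fun x : ℝ => x ^ (-2 : ℝ))) (Ioi 0) :=
    ((integrable_indicator_iff measurableSet_Ici).2 h1).integrableOn
  refine h2.congr_fun ?_ measurableSet_Ioi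
  intro x hx
  have hx' : 0 < x := hx
  by_cases h : 1 ≤ x
  · have e : ((m - 1 : ℕ) : ℝ) = (m : ℝ) - 1 := by
      rw [Nat.cast_sub (by omega)]; simp
    simp only [farProf, indicator, mem_Ici, h, if_true, smul_eq_mul]
    rw [← Real.rpow_natCast, ← Real.rpow_add hx', e]
    congr 1; ring
  · simp [farProf, indicator, h]

/-- the annulus -/
def annU (m : ℕ) (δ : ℝ) : Set (EuclideanSpace ℝ (Fin m)) :=
  {x | (1 - δ) / 2 < ‖x‖ ∧ ‖x‖ < 1 / 2}

lemma measurableSet_annU (m : ℕ) (δ : ℝ) : MeasurableSet (annU m δ) := by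
  unfold annU
  exact (measurableSet_lt measurable_const measurable_norm).inter
    (measurableSet_lt measurable_norm measurable_const)

lemma volume_annU (m : ℕ) (hm : 2 ≤ m) (δ : ℝ) (h0 : 0 < δ) (h1 : δ < 1) :
    volume (annU m δ) ≤
      ENNReal.ofReal (m * δ * (volume (Metric.ball (0 : EuclideanSpace ℝ (Fin m)) 1)).toReal) := by
  have : Nonempty (Fin m) := ⟨⟨0, by omega⟩⟩
  have hsub : Metric.closedBall (0 : EuclideanSpace ℝ (Fin m)) ((1 - δ) / 2) ⊆
      Metric.ball 0 (1 / 2) := Metric.closedBall_subset_ball (by linarith)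
  have e : annU m δ = Metric.ball (0 : EuclideanSpace ℝ (Fin m)) (1 / 2) \
      Metric.closedBall 0 ((1 - δ) / 2) := by
    ext x; simp [annU, and_comm]
  rw [e, measure_sdiff hsub measurableSet_closedBall.nullMeasurableSet
    measure_closedBall_lt_top.ne, Measure.addHaar_ball _ _ (by norm_num),
    Measure.addHaar_closedBall _ _ (by linarith), finrank_euclideanSpace_fin]
  have hfin : volume (Metric.ball (0 : EuclideanSpace ℝ (Fin m)) 1) ≠ ⊤ := measure_ball_lt_top.ne
  rw [← ENNReal.sub_mul (fun _ _ => hfin), ← ENNReal.ofReal_sub _ (by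
    have : 0 ≤ (1 - δ) / 2 := by linarith
    positivity)]
  rw [ENNReal.ofReal_mul (by positivity), ENNReal.ofReal_toReal hfin]
  gcongr
  have hb := one_add_mul_le_pow (a := -δ) (by linarith) m
  have h2 : ((1 - δ) / 2) ^ m = (1 / 2) ^ m * (1 + -δ) ^ m := by
    rw [← mul_pow]; congr 1; ring
  have h3 : ((1 : ℝ) / 2) ^ m ≤ 1 := pow_le_one₀ (by norm_num) (by norm_num)
  have h4 : (0 : ℝ) ≤ (1 / 2) ^ m := by positivity
  have h5 : 0 ≤ m * δ := by positivity
  rw [h2]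
  nlinarith

lemma pointwise_bound {X : Type*} [MetricSpace X] (m : ℕ) (p : ℝ) (hp : 1 < p) (δ : ℝ)
    (h0 : 0 < δ) (u : EuclideanSpace ℝ (Fin m) → X) (L K : ℝ) (hL : 0 ≤ L)
    (hLip : ∀ x y : EuclideanSpace ℝ (Fin m), dist (u x) (u y) ≤ L / δ * dist x y)
    (hK : ∀ x y : EuclideanSpace ℝ (Fin m), dist (u x) (u y) ≤ K)
    (x y : EuclideanSpace ℝ (Fin m)) :
    edist (u x) (u y) ^ p / edist x y ^ ((m : ℝ) + 1) ≤
      ENNReal.ofReal (δ ^ (-(m : ℝ) - 1) * (L ^ p * nearProf m p ‖δ⁻¹ • (x - y)‖ +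
        K ^ p * farProf m ‖δ⁻¹ • (x - y)‖)) := by
  have hK0 : 0 ≤ K := dist_nonneg.trans (hK x y)
  rcases eq_or_ne x y with rfl | hxy
  · rw [edist_self, ENNReal.zero_rpow_of_pos (by linarith)]; simp
  have hd : 0 < dist x y := dist_pos.2 hxy
  rw [edist_dist, edist_dist, ENNReal.ofReal_rpow_of_nonneg dist_nonneg (by linarith),
    ENNReal.ofReal_rpow_of_pos hd, ← ENNReal.ofReal_div_of_pos (by positivity)]
  apply ENNReal.ofReal_le_ofReal
  have hw : ‖δ⁻¹ • (x - y)‖ = dist x y / δ := by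
    rw [norm_smul, Real.norm_of_nonneg (by positivity), ← dist_eq_norm]; ring
  rw [hw]
  set w := dist x y / δ with hwd
  have hw0 : 0 < w := by positivity
  have hdw : dist x y = δ * w := by rw [hwd]; field_simp
  have hden : (dist x y) ^ ((m : ℝ) + 1) = (δ ^ (-(m : ℝ) - 1) * w ^ (-(m : ℝ) - 1))⁻¹ := by
    rw [hdw, ← Real.mul_rpow h0.le hw0.le, ← Real.rpow_neg (by positivity)]
    congr 1; ring
  rw [hden, div_inv_eq_mul]
  have hLw : dist (u x) (u y) ≤ L * w := by
    have := hLip x y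
    rw [hdw] at this
    calc _ ≤ _ := this
      _ = L * w := by field_simp
  by_cases h : w < 1
  · have e1 : nearProf m p w = w ^ p * w ^ (-(m : ℝ) - 1) := by
      rw [← Real.rpow_add hw0]
      simp only [nearProf, indicator, mem_Iio, h, if_true]
      congr 1; ring
    have e2 : farProf m w = 0 := by simp [farProf, indicator, h]
    rw [e1, e2, mul_zero, add_zero]
    calc dist (u x) (u y) ^ p * (δ ^ (-(m : ℝ) - 1) * w ^ (-(m : ℝ) - 1))
        ≤ (L * w) ^ p * (δ ^ (-(m : ℝ) - 1) * w ^ (-(m : ℝ) - 1)) := by gcongr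
      _ = _ := by rw [Real.mul_rpow hL hw0.le]; ring
  · have e1 : nearProf m p w = 0 := by simp [nearProf, indicator, h]
    have e2 : farProf m w = w ^ (-(m : ℝ) - 1) := by
      simp only [farProf, indicator, mem_Ici, not_lt.1 h, if_true]
    rw [e1, e2, mul_zero, zero_add]
    calc dist (u x) (u y) ^ p * (δ ^ (-(m : ℝ) - 1) * w ^ (-(m : ℝ) - 1))
        ≤ K ^ p * (δ ^ (-(m : ℝ) - 1) * w ^ (-(m : ℝ) - 1)) := by gcongr; exact hK x y
      _ = _ := by ring

lemma lintegral_kernel (m : ℕ) (hm : 2 ≤ m) (p : ℝ) (hp : 1 < p) (δ : ℝ) (h0 : 0 < δ)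
    (a b : ℝ) (ha : 0 ≤ a) (hb : 0 ≤ b) :
    ∫⁻ z : EuclideanSpace ℝ (Fin m), ENNReal.ofReal (δ ^ (-(m : ℝ) - 1) *
      (a * nearProf m p ‖δ⁻¹ • z‖ + b * farProf m ‖δ⁻¹ • z‖)) =
    ENNReal.ofReal (δ⁻¹ * (a * (∫ z : EuclideanSpace ℝ (Fin m), nearProf m p ‖z‖) +
      b * (∫ z : EuclideanSpace ℝ (Fin m), farProf m ‖z‖))) := by
  have hN := integrable_near m hm p hp
  have hF := integrable_far m hm
  have hg : Integrable (fun z : EuclideanSpace ℝ (Fin m) =>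
      a * nearProf m p ‖z‖ + b * farProf m ‖z‖) := (hN.const_mul a).add (hF.const_mul b)
  have hgs := (hg.comp_smul (inv_ne_zero h0.ne')).const_mul (δ ^ (-(m : ℝ) - 1))
  rw [← ofReal_integral_eq_lintegral_ofReal hgs]
  · congr 1
    rw [integral_const_mul, Measure.integral_comp_smul volume (fun z : EuclideanSpace ℝ (Fin m) =>
      a * nearProf m p ‖z‖ + b * farProf m ‖z‖), integral_add (hN.const_mul a) (hF.const_mul b),
      integral_const_mul, integral_const_mul, finrank_euclideanSpace_fin, smul_eq_mul, ← mul_assoc]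
    congr 1
    rw [abs_of_nonneg (by positivity), inv_pow, inv_inv, ← Real.rpow_natCast, ← Real.rpow_add h0,
      ← Real.rpow_neg_one]
    congr 1; ring
  · refine Filter.Eventually.of_forall fun z => ?_
    have := nearProf_nonneg m p ‖δ⁻¹ • z‖ (norm_nonneg _)
    have := farProf_nonneg m ‖δ⁻¹ • z‖ (norm_nonneg _)
    simp only [Pi.zero_apply]
    positivity

end

/-- **Uniform `W^{s,p}` bound for the annular transition maps, `sp = 1`.** Let `m ≥ 2`,
`0 < s < 1`, `p = 1/s`. There is a constant `C = C(m,p)` such that for every metric space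
`X`, every `δ ∈ (0,1)`, and every map `u : ℝ^m → X` which is `(L/δ)`-Lipschitz, constant
outside `U_δ = {x : (1-δ)/2 < |x| < 1/2}`, and has image of diameter at most `K`, one has
`∫∫ d(u(x),u(y))^p/|x-y|^{m+1} dx dy ≤ C (L^p + K^p)`; the bound is independent of `δ`. -/
theorem annular_transition_uniform_bound (s p : ℝ) (m : ℕ) (hm : 2 ≤ m)
    (hs0 : 0 < s) (hs1 : s < 1) (hp : p = 1 / s) :
    ∃ C : ℝ, 0 < C ∧
      ∀ (X : Type*) [MetricSpace X] (δ : ℝ), 0 < δ → δ < 1 →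
      ∀ (u : EuclideanSpace ℝ (Fin m) → X) (L K : ℝ), 0 ≤ L →
        (∀ x y : EuclideanSpace ℝ (Fin m), dist (u x) (u y) ≤ L / δ * dist x y) →
        (∀ x y : EuclideanSpace ℝ (Fin m),
          ¬((1 - δ) / 2 < ‖x‖ ∧ ‖x‖ < 1 / 2) → ¬((1 - δ) / 2 < ‖y‖ ∧ ‖y‖ < 1 / 2) →
            u x = u y) →
        (∀ x y : EuclideanSpace ℝ (Fin m), dist (u x) (u y) ≤ K) →
        (∫⁻ x : EuclideanSpace ℝ (Fin m), ∫⁻ y : EuclideanSpace ℝ (Fin m),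
            edist (u x) (u y) ^ p / edist x y ^ ((m : ℝ) + 1)) ≤
          ENNReal.ofReal (C * (L ^ p + K ^ p)) := by
  have hp1 : 1 < p := by rw [hp]; exact (one_lt_div hs0).2 hs1
  set IN := ∫ z : EuclideanSpace ℝ (Fin m), nearProf m p ‖z‖ with hIN
  set IF := ∫ z : EuclideanSpace ℝ (Fin m), farProf m ‖z‖ with hIF
  have hIN0 : 0 ≤ IN := integral_nonneg fun z => nearProf_nonneg m p _ (norm_nonneg _)
  have hIF0 : 0 ≤ IF := integral_nonneg fun z => farProf_nonneg m _ (norm_nonneg _)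
  set V := (volume (Metric.ball (0 : EuclideanSpace ℝ (Fin m)) 1)).toReal with hV
  have hV0 : 0 ≤ V := ENNReal.toReal_nonneg
  refine ⟨2 * (m * V * (IN + IF)) + 1, by positivity, ?_⟩
  intro X _ δ h0 h1 u L K hL hLip hconst hK
  have hK0 : 0 ≤ K := dist_nonneg.trans (hK 0 0)
  have hLp : 0 ≤ L ^ p := by positivity
  have hKp : 0 ≤ K ^ p := by positivity
  set G : EuclideanSpace ℝ (Fin m) → ℝ≥0∞ := fun z => ENNReal.ofReal (δ ^ (-(m : ℝ) - 1) *
      (L ^ p * nearProf m p ‖δ⁻¹ • z‖ + K ^ p * farProf m ‖δ⁻¹ • z‖)) with hG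
  have hGm : Measurable G := by
    have := measurable_nearProf m p
    have := measurable_farProf m
    rw [hG]
    fun_prop
  have hGint : ∫⁻ z, G z = ENNReal.ofReal (δ⁻¹ * (L ^ p * IN + K ^ p * IF)) :=
    lintegral_kernel m hm p hp1 δ h0 _ _ hLp hKp
  set χ : EuclideanSpace ℝ (Fin m) → ℝ≥0∞ := (annU m δ).indicator 1 with hχ
  have hχm : Measurable χ := measurable_one.indicator (measurableSet_annU m δ)
  have hχint : ∫⁻ x, χ x = volume (annU m δ) := lintegral_indicator_one (measurableSet_annU m δ)
  have hpt : ∀ x y, edist (u x) (u y) ^ p / edist x y ^ ((m : ℝ) + 1) ≤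
      χ x * G (x - y) + χ y * G (x - y) := by
    intro x y
    have hb := pointwise_bound m p hp1 δ h0 u L K hL hLip hK x y
    by_cases hx : x ∈ annU m δ
    · have : χ x = 1 := by simp [hχ, hx]
      rw [this, one_mul]
      exact hb.trans le_self_add
    by_cases hy : y ∈ annU m δ
    · have : χ y = 1 := by simp [hχ, hy]
      rw [this, one_mul]
      exact hb.trans le_add_self
    · rw [hconst x y hx hy, edist_self, ENNReal.zero_rpow_of_pos (by linarith)]; simp
  have hm1 : Measurable fun q : EuclideanSpace ℝ (Fin m) × EuclideanSpace ℝ (Fin m) =>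
      χ q.1 * G (q.1 - q.2) := by fun_prop
  have hm2 : Measurable fun q : EuclideanSpace ℝ (Fin m) × EuclideanSpace ℝ (Fin m) =>
      χ q.2 * G (q.1 - q.2) := by fun_prop
  have hI1 : ∫⁻ x, ∫⁻ y, χ x * G (x - y) = volume (annU m δ) * ∫⁻ z, G z := by
    have : ∀ x, ∫⁻ y, χ x * G (x - y) = χ x * ∫⁻ z, G z := fun x => by
      rw [lintegral_const_mul _ (by fun_prop), lintegral_sub_left_eq_self]
    simp_rw [this]
    rw [lintegral_mul_const _ hχm, hχint]
  have hI2 : ∫⁻ x, ∫⁻ y, χ y * G (x - y) = volume (annU m δ) * ∫⁻ z, G z := by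
    rw [lintegral_lintegral_swap hm2.aemeasurable]
    have : ∀ y, ∫⁻ x, χ y * G (x - y) = χ y * ∫⁻ z, G z := fun y => by
      rw [lintegral_const_mul _ (by fun_prop), lintegral_sub_right_eq_self]
    simp_rw [this]
    rw [lintegral_mul_const _ hχm, hχint]
  calc _ ≤ ∫⁻ x, ∫⁻ y, (χ x * G (x - y) + χ y * G (x - y)) :=
        lintegral_mono fun x => lintegral_mono fun y => hpt x y
    _ = ∫⁻ x, ((∫⁻ y, χ x * G (x - y)) + ∫⁻ y, χ y * G (x - y)) := by
        refine lintegral_congr fun x => ?_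
        rw [lintegral_add_left (by fun_prop)]
    _ = 2 * (volume (annU m δ) * ∫⁻ z, G z) := by
        rw [lintegral_add_left hm1.lintegral_prod_right', hI1, hI2, two_mul]
    _ ≤ 2 * (ENNReal.ofReal (m * δ * V) *
          ENNReal.ofReal (δ⁻¹ * (L ^ p * IN + K ^ p * IF))) := by
        rw [hGint]
        gcongr
        exact volume_annU m hm δ h0 h1
    _ = ENNReal.ofReal (2 * (m * V * (L ^ p * IN + K ^ p * IF))) := by
        rw [← ENNReal.ofReal_mul (by positivity), ENNReal.ofReal_mul (p := 2) (by norm_num)]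
        congr 1
        · simp
        · congr 1; field_simp
    _ ≤ _ := by
        apply ENNReal.ofReal_le_ofReal
        have hmV : 0 ≤ m * V := by positivity
        have : L ^ p * IN + K ^ p * IF ≤ (IN + IF) * (L ^ p + K ^ p) := by
          nlinarith [mul_nonneg hLp hIF0, mul_nonneg hKp hIN0]
        nlinarith [mul_le_mul_of_nonneg_left this hmV]
end
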